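/- arXiv:2303.10041 — 6 statements merged into one kernel-verified Lean document; each statement's English description precedes it below -/
import Mathlib

section
/- Fix α, β ≥ 0 with α + β > 0. The space 𝒟_{α,β} is invariant under the basic Cartesian product cosine family: for every t ∈ ℝ and every (g₁,g₂) ∈ 𝒟_{α,β}, the pair C_D(t)(g₁,g₂) = (C(t)g₁, C(t)g₂) again belongs to 𝒟_{α,β}. -/
/-!
Put `a = α + β`, `h = β g₂ - α g₁ᵀ` and `E = g₂ᵉ`. By variation of constants
(`hasDerivAt_of_duhamel`, `duhamel_of_hasDerivAt`), the identity
`E = g₂(0) e_a + e_a * h` says that `E' = -a E + h` with `E(0) = g₂(0)`, and the other identity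
then says that `g₁ᵉ = -E`. The operator `C(t)` is linear, commutes with differentiation and with
the reflection `f ↦ fᵀ`, so `C(t)E = (C(t)g₂)ᵉ` solves the same equation with `C(t)h` in place
of `h`; its value at `0` is `(C(t)g₂)(0)` since an even part agrees with the function at `0`.
Likewise `(C(t)g₁)ᵉ = -C(t)E`.
-/

open Filter Topology MeasureTheory Set intervalIntegral

noncomputable section

/-- `f` belongs to `C[-infty,infty]`: continuous with finite limits at both infinities. -/
def Cinf (f : ℝ → ℝ) : Prop :=
  Continuous f ∧ (∃ L, Tendsto f atTop (nhds L)) ∧ (∃ L, Tendsto f atBot (nhds L))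

/-- odd part of a function -/
def oddPart (f : ℝ → ℝ) : ℝ → ℝ := fun x => (f x - f (-x)) / 2

/-- even part of a function -/
def evenPart (f : ℝ → ℝ) : ℝ → ℝ := fun x => (f x + f (-x)) / 2

/-- the exponential function `e_a(x) = exp(-a x)` -/
def expa (a : ℝ) : ℝ → ℝ := fun x => Real.exp (-(a * x))

/-- the (signed) convolution `(f*g)(x) = ∫_0^x f(x-y) g(y) dy`, for all real `x` -/
def conv (f g : ℝ → ℝ) : ℝ → ℝ := fun x => ∫ y in (0:ℝ)..x, f (x - y) * g y

/-- the basic cosine family `C(t)f(x) = (f(x+t)+f(x-t))/2` -/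
def cosF (t : ℝ) (f : ℝ → ℝ) : ℝ → ℝ := fun x => (f (x + t) + f (x - t)) / 2

/-- membership in the complementary subspace `𝒟_{α,β}` of `𝒞` -/
def memDab (α β : ℝ) (g₁ g₂ : ℝ → ℝ) : Prop :=
  Cinf g₁ ∧ Cinf g₂ ∧
  (∀ x, evenPart g₁ x =
    -(g₂ 0) * expa (α + β) x - conv (expa (α + β)) (fun y => β * g₂ y - α * g₁ (-y)) x) ∧
  (∀ x, evenPart g₂ x =
    g₂ 0 * expa (α + β) x + conv (expa (α + β)) (fun y => β * g₂ y - α * g₁ (-y)) x)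

lemma conv_expa (a : ℝ) (h : ℝ → ℝ) (x : ℝ) :
    conv (expa a) h x = expa a x * ∫ y in (0:ℝ)..x, Real.exp (a * y) * h y := by
  unfold conv expa
  rw [← intervalIntegral.integral_const_mul]
  congr 1
  ext y
  rw [← mul_assoc, ← Real.exp_add]
  congr 2
  ring

lemma hasDerivAt_expa (a x : ℝ) : HasDerivAt (expa a) (-a * expa a x) x := by
  unfold expa
  have h := (((hasDerivAt_id x).const_mul a).neg).exp
  refine h.congr_deriv ?_
  simp [Pi.neg_apply]
  ring

/-- A function given by the variation of constants formula solves `E' = -a E + h`. -/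
lemma hasDerivAt_of_duhamel {a c : ℝ} {E h : ℝ → ℝ} (hh : Continuous h)
    (hE : ∀ x, E x = c * expa a x + conv (expa a) h x) (x : ℝ) :
    HasDerivAt E (-a * E x + h x) x := by
  have hcont : Continuous fun y => Real.exp (a * y) * h y := by fun_prop
  have hint := hcont.integral_hasStrictDerivAt 0 x |>.hasDerivAt
  have hd := ((hasDerivAt_expa a x).const_mul c).add ((hasDerivAt_expa a x).mul hint)
  have hfun : E = fun x => c * expa a x
      + expa a x * ∫ y in (0:ℝ)..x, Real.exp (a * y) * h y := by
    funext y
    rw [hE, conv_expa]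
  have hinv : expa a x * Real.exp (a * x) = 1 := by
    unfold expa
    rw [← Real.exp_add]
    simp
  rw [hfun]
  refine hd.congr_deriv ?_
  linear_combination (h x) * hinv

/-- Solutions of `E' = -a E + h` are given by the variation of constants formula. -/
lemma duhamel_of_hasDerivAt {a : ℝ} {E h : ℝ → ℝ} (hh : Continuous h)
    (hE : ∀ x, HasDerivAt E (-a * E x + h x) x) (x : ℝ) :
    E x = E 0 * expa a x + conv (expa a) h x := by
  have hcont : Continuous fun y => Real.exp (a * y) * h y := by fun_prop
  have hd : ∀ y, HasDerivAt (fun y => Real.exp (a * y) * E y) (Real.exp (a * y) * h y) y := by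
    intro y
    have h1 := (((hasDerivAt_id y).const_mul a).exp).mul (hE y)
    refine h1.congr_deriv ?_
    simp
    ring
  have hint := integral_eq_sub_of_hasDerivAt (fun y _ => hd y) (hcont.intervalIntegrable 0 x)
  have hinv : expa a x * Real.exp (a * x) = 1 := by
    unfold expa
    rw [← Real.exp_add]
    simp
  rw [conv_expa, hint]
  simp only [mul_zero, Real.exp_zero]
  linear_combination -(E x) * hinv

lemma Cinf.cosF {f : ℝ → ℝ} (hf : Cinf f) (t : ℝ) : Cinf (cosF t f) := by
  obtain ⟨hc, ⟨L, hL⟩, ⟨M, hM⟩⟩ := hf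
  unfold _root_.cosF
  refine ⟨by fun_prop, ⟨(L + L) / 2, ?_⟩, ⟨(M + M) / 2, ?_⟩⟩
  · exact ((hL.comp (tendsto_atTop_add_const_right _ t tendsto_id)).add
      (hL.comp (tendsto_atTop_add_const_right _ (-t) tendsto_id))).div_const 2
  · exact ((hM.comp (tendsto_atBot_add_const_right _ t tendsto_id)).add
      (hM.comp (tendsto_atBot_add_const_right _ (-t) tendsto_id))).div_const 2

lemma evenPart_cosF (t : ℝ) (f : ℝ → ℝ) : evenPart (cosF t f) = cosF t (evenPart f) := by
  funext x
  simp only [evenPart, cosF, show -(x + t) = -x - t by ring, show -(x - t) = -x + t by ring]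
  ring

/-- `C(t)` maps solutions of `E' = -a E + h` to solutions with right-hand side `C(t)h`. -/
lemma hasDerivAt_cosF {a : ℝ} {E h : ℝ → ℝ} (hE : ∀ x, HasDerivAt E (-a * E x + h x) x)
    (t x : ℝ) : HasDerivAt (cosF t E) (-a * cosF t E x + cosF t h x) x := by
  have h1 := (((hE (x + t)).comp_add_const x t).add ((hE (x - t)).comp_sub_const x t)).div_const 2
  refine h1.congr_deriv ?_
  unfold cosF
  ring

/-- `𝒟_{α,β}` is invariant under the basic Cartesian product cosine family. -/
theorem statement12 (α β : ℝ) (hα : 0 ≤ α) (hβ : 0 ≤ β) (hαβ : 0 < α + β)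
    (t : ℝ) (g₁ g₂ : ℝ → ℝ) (hg : memDab α β g₁ g₂) :
    memDab α β (cosF t g₁) (cosF t g₂) := by
  obtain ⟨hC₁, hC₂, h₁, h₂⟩ := hg
  have hc₁ := hC₁.1
  have hc₂ := hC₂.1
  set h : ℝ → ℝ := fun y => β * g₂ y - α * g₁ (-y) with hdef
  have hh : Continuous h := by fun_prop
  have hht : Continuous (cosF t h) := by
    unfold cosF
    fun_prop
  have hrhs : (fun y => β * cosF t g₂ y - α * cosF t g₁ (-y)) = cosF t h := by
    funext y
    simp only [cosF, hdef, show -(y + t) = -y - t by ring, show -(y - t) = -y + t by ring]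
    ring
  have hneg : ∀ x, evenPart g₁ x = -evenPart g₂ x := fun x => by
    rw [h₁, h₂]
    ring
  have hzero : cosF t (evenPart g₂) 0 = cosF t g₂ 0 := by
    simp only [cosF, evenPart, zero_add, zero_sub, neg_neg]
    ring
  have hsol : ∀ x, evenPart (cosF t g₂) x
      = cosF t g₂ 0 * expa (α + β) x + conv (expa (α + β)) (cosF t h) x := fun x => by
    rw [evenPart_cosF, ← hzero]
    exact duhamel_of_hasDerivAt hht (hasDerivAt_cosF (hasDerivAt_of_duhamel hh h₂) t) x
  refine ⟨hC₁.cosF t, hC₂.cosF t, fun x => ?_, fun x => ?_⟩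
  · have hneg' : evenPart (cosF t g₁) x = -evenPart (cosF t g₂) x := by
      simp only [evenPart_cosF, cosF, hneg]
      ring
    rw [hrhs, hneg', hsol]
    ring
  · rw [hrhs]
    exact hsol x
end
end

section
/- Fix α, β ≥ 0 with α + β > 0. The operator E^⊥_{α,β} is a linear bijection from 𝔛_ov onto 𝒟_{α,β}: (i) for every f ∈ 𝔛_ov, E^⊥_{α,β} f = (f̃_ℓ, f̃_r) belongs to 𝒟_{α,β} (in particular f̃_ℓ, f̃_r are continuous on ℝ with finite limits at ±∞); (ii) ‖E^⊥_{α,β} f‖ ≤ 5‖f‖_∞; (iii) R(E^⊥_{α,β} f) = f for every f ∈ 𝔛_ov, and E^⊥_{α,β}(R(g₁,g₂)) = (g₁,g₂) for every (g₁,g₂) ∈ 𝒟_{α,β}. -/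
/-!
Write `a = α + β`. Both extensions are governed by one function `h` on `[0, ∞)`, the solution of
`h' = -a h + Φ`, `h(0) = f(0+)`, where `Φ(y) = β f(y) - α f(-y)` for `y > 0`: on their new
half-lines `f̃_ℓ(x) = -f(-x) - 2 h(x)` and `f̃_r(-x) = -f(x) + 2 h(x)`, so the even parts of the two
extensions are `∓ h(|x|)`.

* Variation of constants (`solODE`) and `|Φ| ≤ a ‖f‖` give `|h| ≤ ‖f‖` (`abs_solODE_le`); hence both
  extensions are bounded by `3 ‖f‖`. Dominated convergence gives the limit of `h` at `+∞`
  (`exists_tendsto_solODE`).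
* The defining identities of `𝒟_{α,β}` are immediate for `x ≥ 0`. For `x < 0` the source term
  `φ = β f̃_r - α f̃_ℓ(-·)` satisfies `φ(-y) = 2 a h(y) - Φ(y)`, which is exactly what makes the
  solution of the equation even: `(e^{-ay} h(y))' = -e^{-ay} φ(-y)` (`solODE_reflect`).
* Conversely, for `(g₁, g₂) ∈ 𝒟_{α,β}` the integrand at `x > 0` only involves `g₂` on `(0, ∞)` and
  `g₁` on `(-∞, 0)`, so the identities recover `g₁`, `g₂` from the restriction.
-/

open Filter Topology MeasureTheory Set intervalIntegral

noncomputable section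

/-- membership in `𝔛`: functions on `ℝ \\ {0}` (the value at `0` is irrelevant), continuous on
both open half-lines, with finite one-sided limits at `0` and finite limits at `±∞`. -/
def memX (f : ℝ → ℝ) : Prop :=
  ContinuousOn f (Iio 0) ∧ ContinuousOn f (Ioi 0) ∧
  (∃ L, Tendsto f (nhdsWithin 0 (Iio 0)) (nhds L)) ∧
  (∃ L, Tendsto f (nhdsWithin 0 (Ioi 0)) (nhds L)) ∧
  (∃ L, Tendsto f atTop (nhds L)) ∧ (∃ L, Tendsto f atBot (nhds L))

/-- supremum norm on `𝔛` (the point `0` does not count) -/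
def Xnorm (f : ℝ → ℝ) : ℝ := ⨆ x : {y : ℝ // y ≠ 0}, |f x.1|

/-- supremum norm on `C[-∞,∞]` -/
def Cnorm (f : ℝ → ℝ) : ℝ := ⨆ x : ℝ, |f x|

/-- the restriction operator `R : 𝒞 → 𝔛` -/
def restr (ψ₁ ψ₂ : ℝ → ℝ) : ℝ → ℝ := fun x => if x < 0 then ψ₁ x else ψ₂ x

/-- the extension `f̃_ℓ` used by `E⊥_{α,β}`; `fm = f(0-)`, `fp = f(0+)` -/
def extPL (α β : ℝ) (f : ℝ → ℝ) (fm fp : ℝ) : ℝ → ℝ := fun x =>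
  if x < 0 then f x
  else if x = 0 then fm
  else -f (-x) - 2 * fp * Real.exp (-((α + β) * x)) -
    2 * ∫ y in (0:ℝ)..x, Real.exp (-((α + β) * (x - y))) * (β * f y - α * f (-y))

/-- the extension `f̃_r` used by `E⊥_{α,β}`; `fp = f(0+)` -/
def extPR (α β : ℝ) (f : ℝ → ℝ) (fp : ℝ) : ℝ → ℝ := fun x =>
  if 0 < x then f x
  else if x = 0 then fp
  else -f (-x) + 2 * fp * Real.exp (-((α + β) * (-x))) +
    2 * ∫ y in (0:ℝ)..(-x), Real.exp (-((α + β) * (-x - y))) * (β * f y - α * f (-y))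

/-! ### The scalar equation `h' = -a h + Φ` -/

/-- The solution of `h' = -a h + Φ`, `h(0) = c`, given by variation of constants. -/
def solODE (a c : ℝ) (Φ : ℝ → ℝ) : ℝ → ℝ := fun x =>
  Real.exp (-(a * x)) * (c + ∫ y in (0:ℝ)..x, Real.exp (a * y) * Φ y)

lemma solODE_zero (a c : ℝ) (Φ : ℝ → ℝ) : solODE a c Φ 0 = c := by
  simp [solODE]

lemma solODE_eq (a c : ℝ) (Φ : ℝ → ℝ) (x : ℝ) :
    solODE a c Φ x = c * Real.exp (-(a * x)) +
      ∫ y in (0:ℝ)..x, Real.exp (-(a * (x - y))) * Φ y := by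
  have : ∀ y, Real.exp (-(a * (x - y))) * Φ y =
      Real.exp (-(a * x)) * (Real.exp (a * y) * Φ y) := by
    intro y
    rw [← mul_assoc, ← Real.exp_add]
    ring_nf
  simp only [this, intervalIntegral.integral_const_mul, solODE]
  ring

lemma hasDerivAt_solODE (a c : ℝ) {Φ : ℝ → ℝ} (hΦ : Continuous Φ) (x : ℝ) :
    HasDerivAt (solODE a c Φ) (-a * solODE a c Φ x + Φ x) x := by
  have hc : Continuous fun y => Real.exp (a * y) * Φ y := by fun_prop
  have h1 : HasDerivAt (fun x => c + ∫ y in (0:ℝ)..x, Real.exp (a * y) * Φ y)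
      (Real.exp (a * x) * Φ x) x :=
    (hc.integral_hasStrictDerivAt 0 x).hasDerivAt.const_add c
  have h2 : HasDerivAt (fun x : ℝ => Real.exp (-(a * x))) (Real.exp (-(a * x)) * (-(a * 1))) x :=
    (((hasDerivAt_id x).const_mul a).neg).exp
  refine (h2.mul h1).congr_deriv ?_
  have h3 : Real.exp (-(a * x)) * Real.exp (a * x) = 1 := by
    rw [← Real.exp_add]; simp
  simp only [solODE]
  linear_combination Φ x * h3

lemma continuous_solODE (a c : ℝ) {Φ : ℝ → ℝ} (hΦ : Continuous Φ) :
    Continuous (solODE a c Φ) :=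
  continuous_iff_continuousAt.2 fun x => (hasDerivAt_solODE a c hΦ x).continuousAt

lemma abs_solODE_le {a c M : ℝ} {Φ : ℝ → ℝ} (hc : |c| ≤ M)
    (hM : ∀ y, |Φ y| ≤ a * M) {x : ℝ} (hx : 0 ≤ x) : |solODE a c Φ x| ≤ M := by
  have h1 : ‖∫ y in (0:ℝ)..x, Real.exp (a * y) * Φ y‖ ≤
      ∫ y in (0:ℝ)..x, Real.exp (a * y) * a * M := by
    refine intervalIntegral.norm_integral_le_of_norm_le hx (ae_of_all _ fun y _ => ?_)
      (Continuous.intervalIntegrable (by fun_prop) _ _)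
    rw [norm_mul, Real.norm_eq_abs, Real.abs_exp, Real.norm_eq_abs, mul_assoc]
    exact mul_le_mul_of_nonneg_left (hM y) (Real.exp_pos _).le
  have h2 : (∫ y in (0:ℝ)..x, Real.exp (a * y) * a * M) = (Real.exp (a * x) - 1) * M := by
    rw [intervalIntegral.integral_mul_const]
    congr 1
    rw [intervalIntegral.integral_eq_sub_of_hasDerivAt (f := fun y => Real.exp (a * y))]
    · simp
    · intro y _
      simpa using ((hasDerivAt_id y).const_mul a).exp
    · exact Continuous.intervalIntegrable (by fun_prop) _ _
  rw [h2, Real.norm_eq_abs] at h1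
  have h3 : Real.exp (-(a * x)) * Real.exp (a * x) = 1 := by
    rw [← Real.exp_add]; simp
  rw [solODE, abs_mul, Real.abs_exp]
  calc _ ≤ Real.exp (-(a * x)) * (M + (Real.exp (a * x) - 1) * M) := by
        refine mul_le_mul_of_nonneg_left ?_ (Real.exp_pos _).le
        exact (abs_add_le _ _).trans (add_le_add hc h1)
    _ = M := by linear_combination M * h3

/-- The substitution `y = x - z` turns the convolution into an integral over `(0, x]` whose
integrand converges pointwise and is dominated by a multiple of `e^{-az}`. -/
lemma exists_tendsto_solODE {a : ℝ} (c : ℝ) {C : ℝ} {Φ : ℝ → ℝ} (ha : 0 < a) (hΦ : Continuous Φ)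
    (hC : ∀ y, |Φ y| ≤ C) (hL : ∃ L, Tendsto Φ atTop (𝓝 L)) :
    ∃ L, Tendsto (solODE a c Φ) atTop (𝓝 L) := by
  obtain ⟨L, hL⟩ := hL
  have hexp : Tendsto (fun x : ℝ => Real.exp (-(a * x))) atTop (𝓝 0) :=
    Real.tendsto_exp_neg_atTop_nhds_zero.comp (tendsto_id.const_mul_atTop ha)
  have hint : IntegrableOn (fun z : ℝ => Real.exp (-(a * z))) (Ioi 0) := by
    simpa [neg_mul] using exp_neg_integrableOn_Ioi 0 ha
  have key : Tendsto (fun x : ℝ => ∫ z in Ioi (0:ℝ),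
      (Iic x).indicator (fun z => Real.exp (-(a * z)) * Φ (x - z)) z) atTop
      (𝓝 (∫ z in Ioi (0:ℝ), Real.exp (-(a * z)) * L)) := by
    refine tendsto_integral_filter_of_dominated_convergence
      (fun z => Real.exp (-(a * z)) * C) ?_ ?_ (hint.mul_const C) ?_
    · refine Eventually.of_forall fun x => ?_
      refine AEStronglyMeasurable.indicator ?_ measurableSet_Iic
      exact Continuous.aestronglyMeasurable (by fun_prop)
    · refine Eventually.of_forall fun x => ae_of_all _ fun z => ?_
      refine (norm_indicator_le_norm_self _ _).trans ?_
      rw [norm_mul, Real.norm_eq_abs, Real.abs_exp, Real.norm_eq_abs]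
      exact mul_le_mul_of_nonneg_left (hC _) (Real.exp_pos _).le
    · refine ae_of_all _ fun z => ?_
      have h1 : Tendsto (fun x : ℝ => Real.exp (-(a * z)) * Φ (x - z)) atTop
          (𝓝 (Real.exp (-(a * z)) * L)) :=
        (hL.comp (tendsto_atTop_add_const_right _ (-z) tendsto_id)).const_mul _
      refine h1.congr' ?_
      filter_upwards [eventually_ge_atTop z] with x hx
      rw [indicator_of_mem (by exact hx)]
  refine ⟨_, ((hexp.const_mul c).add key).congr' ?_⟩
  filter_upwards [eventually_ge_atTop 0] with x hx
  rw [solODE_eq, setIntegral_indicator measurableSet_Iic, Ioi_inter_Iic,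
    ← intervalIntegral.integral_of_le hx]
  congr 1
  have := intervalIntegral.integral_comp_sub_left (a := 0) (b := x)
    (fun y => Real.exp (-(a * (x - y))) * Φ y) x
  simpa using this

/-- If the source term on the negative half-line is `φ(-y) = 2 a h(y) - Φ(y)`, where `h` solves
the equation with source `Φ`, then the solution with source `φ` is the reflection of `h`. -/
lemma solODE_reflect (a c : ℝ) {Φ φ : ℝ → ℝ} (hΦ : Continuous Φ) {x : ℝ} (hx : 0 ≤ x)
    (hφ : ∀ y, 0 ≤ y → φ (-y) = 2 * a * solODE a c Φ y - Φ y) :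
    solODE a c φ (-x) = solODE a c Φ x := by
  have hh := continuous_solODE a c hΦ
  have h1 : (∫ y in (0:ℝ)..(-x), Real.exp (a * y) * φ y) =
      ∫ y in (0:ℝ)..x, Real.exp (-(a * y)) * (-a * solODE a c Φ y) +
        Real.exp (-(a * y)) * (-a * solODE a c Φ y + Φ y) := by
    have h2 := intervalIntegral.integral_comp_neg (a := 0) (b := x)
      (fun y => Real.exp (a * y) * φ y)
    rw [neg_zero] at h2
    rw [intervalIntegral.integral_symm, ← h2, ← intervalIntegral.integral_neg]
    refine intervalIntegral.integral_congr fun y hy => ?_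
    rw [uIcc_of_le hx] at hy
    simp only [hφ y hy.1]
    ring_nf
  have h3 := intervalIntegral.integral_eq_sub_of_hasDerivAt
    (f := fun y => Real.exp (-(a * y)) * solODE a c Φ y)
    (f' := fun y => Real.exp (-(a * y)) * (-a * solODE a c Φ y) +
        Real.exp (-(a * y)) * (-a * solODE a c Φ y + Φ y)) (a := 0) (b := x)
    (fun y _ => by
      have h2 : HasDerivAt (fun x : ℝ => Real.exp (-(a * x)))
          (Real.exp (-(a * y)) * (-(a * 1))) y :=
        (((hasDerivAt_id y).const_mul a).neg).exp
      refine (h2.mul (hasDerivAt_solODE a c hΦ y)).congr_deriv ?_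
      ring)
    (Continuous.intervalIntegrable (by fun_prop) _ _)
  have h4 : Real.exp (a * x) * Real.exp (-(a * x)) = 1 := by
    rw [← Real.exp_add]; simp
  rw [solODE, h1, h3, solODE_zero]
  simp only [mul_zero, neg_zero, Real.exp_zero, mul_neg, neg_neg]
  linear_combination solODE a c Φ x * h4

/-! ### Constant extension across the origin -/

/-- A function on `(0, ∞)` extended to `ℝ` by the constant `p`, meant to be its limit at `0+`. -/
def extConst (f : ℝ → ℝ) (p : ℝ) : ℝ → ℝ := fun x => if 0 < x then f x else p

lemma extConst_of_pos {f : ℝ → ℝ} {p x : ℝ} (hx : 0 < x) : extConst f p x = f x := by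
  simp [extConst, hx]

lemma extConst_of_nonpos {f : ℝ → ℝ} {p x : ℝ} (hx : x ≤ 0) : extConst f p x = p := by
  simp [extConst, hx.not_gt]

lemma continuous_extConst {f : ℝ → ℝ} {p : ℝ} (hf : ContinuousOn f (Ioi 0))
    (hp : Tendsto f (𝓝[>] 0) (𝓝 p)) : Continuous (extConst f p) := by
  refine continuous_iff_continuousAt.2 fun x => ?_
  rcases lt_trichotomy x 0 with hx | rfl | hx
  · refine (continuousAt_const (y := p)).congr ?_
    filter_upwards [Iio_mem_nhds hx] with y hy
    exact (extConst_of_nonpos (le_of_lt hy)).symm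
  · rw [continuousAt_iff_continuous_left'_right']
    constructor
    · refine (continuousWithinAt_const (b := p)).congr (fun y hy => ?_) ?_
      · exact extConst_of_nonpos (le_of_lt hy)
      · exact extConst_of_nonpos le_rfl
    · rw [ContinuousWithinAt, extConst_of_nonpos le_rfl]
      refine hp.congr' ?_
      filter_upwards [self_mem_nhdsWithin] with y hy
      exact (extConst_of_pos hy).symm
  · refine (hf.continuousAt (Ioi_mem_nhds hx)).congr ?_
    filter_upwards [Ioi_mem_nhds hx] with y hy
    exact (extConst_of_pos hy).symm

lemma tendsto_extConst {f : ℝ → ℝ} {p L : ℝ} (hf : Tendsto f atTop (𝓝 L)) :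
    Tendsto (extConst f p) atTop (𝓝 L) := by
  refine hf.congr' ?_
  filter_upwards [eventually_gt_atTop 0] with y hy
  exact (extConst_of_pos hy).symm

lemma exists_bound_extConst {f : ℝ → ℝ} {p L : ℝ} (hf : ContinuousOn f (Ioi 0))
    (hp : Tendsto f (𝓝[>] 0) (𝓝 p)) (hL : Tendsto f atTop (𝓝 L)) :
    ∃ C, ∀ x, |extConst f p x| ≤ C := by
  have h1 := (tendsto_extConst (p := p) hL).abs.eventually_le_const (lt_add_one |L|)
  obtain ⟨N, hN⟩ := eventually_atTop.1 h1
  obtain ⟨C, hC⟩ := (isCompact_Icc (a := (0:ℝ)) (b := N)).exists_bound_of_continuousOn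
    (continuous_extConst hf hp).continuousOn
  refine ⟨max |p| (max C (|L| + 1)), fun x => ?_⟩
  rcases le_or_gt x 0 with hx | hx
  · rw [extConst_of_nonpos hx]
    exact le_max_left _ _
  · rcases le_total x N with hxN | hxN
    · exact le_max_of_le_right (le_max_of_le_left (hC x ⟨hx.le, hxN⟩))
    · exact le_max_of_le_right (le_max_of_le_right (hN x hxN))

/-! ### The extension operator maps into `𝒟_{α,β}` -/

/-- The extensions expressed through `h = solODE (α + β) f(0+) Φ`, where `Φ` is the continuous
function `β f - α f(-·)` on `(0, ∞)`, extended by a constant to the left. -/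
lemma ext_eq {α β : ℝ} {f : ℝ → ℝ} {fm fp : ℝ} {P Q Φ h : ℝ → ℝ}
    (hP : P = extConst f fp) (hQ : Q = extConst (fun x => f (-x)) fm)
    (hΦ : Φ = fun y => β * P y - α * Q y) (hh : h = solODE (α + β) fp Φ) :
    (extPL α β f fm fp = fun x => if x ≤ 0 then Q (-x) else -Q x - 2 * h x) ∧
    (extPR α β f fp = fun x => if 0 ≤ x then P x else -P (-x) + 2 * h (-x)) := by
  have hint : ∀ x, 0 < x →
      (∫ y in (0:ℝ)..x, Real.exp (-((α + β) * (x - y))) * (β * f y - α * f (-y))) =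
      ∫ y in (0:ℝ)..x, Real.exp (-((α + β) * (x - y))) * Φ y := by
    intro x hx
    refine intervalIntegral.integral_congr_ae (ae_of_all _ fun y hy => ?_)
    rw [uIoc_of_le hx.le] at hy
    simp only [hΦ, hP, hQ, extConst_of_pos hy.1]
  constructor
  · funext x
    rcases lt_trichotomy x 0 with hx | rfl | hx
    · simp only [extPL, hx, hx.le, if_true, hQ, extConst_of_pos (neg_pos.2 hx), neg_neg]
    · simp [extPL, hQ, extConst_of_nonpos]
    · simp only [extPL, hx.not_gt, hx.not_ge, hx.ne', if_false, hint x hx, hQ,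
        extConst_of_pos hx, hh, solODE_eq]
      ring
  · funext x
    rcases lt_trichotomy x 0 with hx | rfl | hx
    · have hx' := neg_pos.2 hx
      simp only [extPR, hx.not_gt, hx.not_ge, hx.ne, if_false, hint (-x) hx', hP,
        extConst_of_pos hx', hh, solODE_eq]
      ring
    · simp [extPR, hP, extConst_of_nonpos]
    · simp only [extPR, hx, hx.le, if_true, hP, extConst_of_pos hx]

/-- The forward half: `E⊥ f` lies in `𝒟_{α,β}` and is bounded by `5 ‖f‖`. -/
lemma ext_mem_and_bound {α β : ℝ} (hα : 0 ≤ α) (hβ : 0 ≤ β) (hαβ : 0 < α + β)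
    {f : ℝ → ℝ} {fm fp : ℝ} (hX : memX f)
    (hm : Tendsto f (𝓝[<] 0) (𝓝 fm)) (hp : Tendsto f (𝓝[>] 0) (𝓝 fp)) (hf : fm = -fp) :
    memDab α β (extPL α β f fm fp) (extPR α β f fp) ∧
      max (Cnorm (extPL α β f fm fp)) (Cnorm (extPR α β f fp)) ≤ 5 * Xnorm f := by
  obtain ⟨hcm, hcp, -, -, ⟨Lt, hLt⟩, ⟨Lb, hLb⟩⟩ := hX
  have hcm' : ContinuousOn (fun x => f (-x)) (Ioi 0) :=
    hcm.comp continuousOn_neg fun x hx => by simpa using hx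
  have hneg : Tendsto (fun x : ℝ => -x) (𝓝[>] 0) (𝓝[<] 0) := by
    simpa using tendsto_neg_nhdsGT_neg (a := (0:ℝ))
  have hm' : Tendsto (fun x => f (-x)) (𝓝[>] 0) (𝓝 fm) := hm.comp hneg
  have hLb' : Tendsto (fun x => f (-x)) atTop (𝓝 Lb) := hLb.comp tendsto_neg_atTop_atBot
  obtain ⟨P, hP⟩ : ∃ P, P = extConst f fp := ⟨_, rfl⟩
  obtain ⟨Q, hQ⟩ : ∃ Q, Q = extConst (fun x => f (-x)) fm := ⟨_, rfl⟩
  obtain ⟨Φ, hΦ⟩ : ∃ Φ : ℝ → ℝ, Φ = fun y => β * P y - α * Q y := ⟨_, rfl⟩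
  obtain ⟨h, hh⟩ : ∃ h, h = solODE (α + β) fp Φ := ⟨_, rfl⟩
  obtain ⟨hl, hr⟩ := ext_eq hP hQ hΦ hh
  have P0 : P 0 = fp := by rw [hP, extConst_of_nonpos le_rfl]
  have Q0 : Q 0 = fm := by rw [hQ, extConst_of_nonpos le_rfl]
  have h0 : h 0 = fp := by rw [hh, solODE_zero]
  have hPc : Continuous P := hP ▸ continuous_extConst hcp hp
  have hQc : Continuous Q := hQ ▸ continuous_extConst hcm' hm'
  have hΦc : Continuous Φ := by rw [hΦ]; fun_prop
  have hhc : Continuous h := hh ▸ continuous_solODE _ _ hΦc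
  have hPt : Tendsto P atTop (𝓝 Lt) := hP ▸ tendsto_extConst hLt
  have hQt : Tendsto Q atTop (𝓝 Lb) := hQ ▸ tendsto_extConst hLb'
  -- `f` is bounded off `0`, so its supremum norm is a genuine bound.
  have hbdd : BddAbove (range fun x : {y : ℝ // y ≠ 0} => |f x.1|) := by
    obtain ⟨C, hC⟩ := exists_bound_extConst hcp hp hLt
    obtain ⟨D, hD⟩ := exists_bound_extConst hcm' hm' hLb'
    refine ⟨max C D, ?_⟩
    rintro _ ⟨⟨x, hx⟩, rfl⟩
    rcases lt_or_gt_of_ne hx with hx | hx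
    · have := hD (-x)
      rw [extConst_of_pos (neg_pos.2 hx), neg_neg] at this
      exact le_max_of_le_right this
    · have := hC x
      rw [extConst_of_pos hx] at this
      exact le_max_of_le_left this
  obtain ⟨M, hM⟩ : ∃ M, M = Xnorm f := ⟨_, rfl⟩
  have hfM : ∀ x, x ≠ 0 → |f x| ≤ M := fun x hx =>
    hM ▸ le_ciSup hbdd (⟨x, hx⟩ : {y : ℝ // y ≠ 0})
  have hM0 : 0 ≤ M := (abs_nonneg _).trans (hfM 1 one_ne_zero)
  have hfp : |fp| ≤ M := by
    refine le_of_tendsto hp.abs ?_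
    filter_upwards [self_mem_nhdsWithin] with y hy
    exact hfM y (ne_of_gt hy)
  have hfm : |fm| ≤ M := by rw [hf, abs_neg]; exact hfp
  have hPM : ∀ x, |P x| ≤ M := by
    intro x
    rcases le_or_gt x 0 with hx | hx
    · rw [hP, extConst_of_nonpos hx]; exact hfp
    · rw [hP, extConst_of_pos hx]; exact hfM x hx.ne'
  have hQM : ∀ x, |Q x| ≤ M := by
    intro x
    rcases le_or_gt x 0 with hx | hx
    · rw [hQ, extConst_of_nonpos hx]; exact hfm
    · rw [hQ, extConst_of_pos hx]; exact hfM (-x) (neg_ne_zero.2 hx.ne')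
  have hΦM : ∀ x, |Φ x| ≤ (α + β) * M := by
    intro x
    rw [hΦ]
    have h1 := abs_sub (β * P x) (α * Q x)
    rw [abs_mul, abs_mul, abs_of_nonneg hα, abs_of_nonneg hβ] at h1
    have h2 := mul_le_mul_of_nonneg_left (hPM x) hβ
    have h3 := mul_le_mul_of_nonneg_left (hQM x) hα
    simp only
    linarith
  have hhM : ∀ x, 0 ≤ x → |h x| ≤ M := fun x hx => hh ▸ abs_solODE_le hfp hΦM hx
  obtain ⟨Lh, hht⟩ : ∃ L, Tendsto h atTop (𝓝 L) := by
    rw [hh]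
    refine exists_tendsto_solODE fp hαβ hΦc hΦM ⟨β * Lt - α * Lb, ?_⟩
    rw [hΦ]
    exact (hPt.const_mul β).sub (hQt.const_mul α)
  rw [← hM, hl, hr]
  obtain ⟨g₁, hg₁⟩ : ∃ g₁ : ℝ → ℝ, g₁ = fun x => if x ≤ 0 then Q (-x) else -Q x - 2 * h x :=
    ⟨_, rfl⟩
  obtain ⟨g₂, hg₂⟩ : ∃ g₂ : ℝ → ℝ, g₂ = fun x => if 0 ≤ x then P x else -P (-x) + 2 * h (-x) :=
    ⟨_, rfl⟩
  rw [← hg₁, ← hg₂]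
  have g₁neg : ∀ x, 0 ≤ x → g₁ (-x) = Q x := by
    intro x hx
    simp [hg₁, hx]
  have g₁pos : ∀ x, 0 ≤ x → g₁ x = -Q x - 2 * h x := by
    intro x hx
    rcases hx.eq_or_lt with rfl | hx
    · simp only [hg₁, le_refl, if_true, neg_zero, Q0, h0, hf]; ring
    · simp [hg₁, hx.not_ge]
  have g₂pos : ∀ x, 0 ≤ x → g₂ x = P x := by
    intro x hx
    simp [hg₂, hx]
  have g₂neg : ∀ x, 0 ≤ x → g₂ (-x) = -P x + 2 * h x := by
    intro x hx
    rcases hx.eq_or_lt with rfl | hx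
    · simp only [hg₂, le_refl, if_true, neg_zero, P0, h0]; ring
    · simp [hg₂, hx.not_ge]
  have g₂0 : g₂ 0 = fp := by rw [g₂pos 0 le_rfl, P0]
  have hC₁ : Cinf g₁ := by
    refine ⟨?_, ⟨-Lb - 2 * Lh, ?_⟩, ⟨Lb, ?_⟩⟩
    · rw [hg₁]
      refine Continuous.if_le (by fun_prop) (by fun_prop) continuous_id continuous_const ?_
      rintro x rfl
      simp only [neg_zero, Q0, h0, hf]; ring
    · refine (hQt.neg.sub (hht.const_mul 2)).congr' ?_
      filter_upwards [eventually_ge_atTop 0] with x hx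
      exact (g₁pos x hx).symm
    · refine (hQt.comp tendsto_neg_atBot_atTop).congr' ?_
      filter_upwards [eventually_le_atBot 0] with x hx
      have := g₁neg (-x) (neg_nonneg.2 hx)
      rw [neg_neg] at this
      exact this.symm
  have hC₂ : Cinf g₂ := by
    refine ⟨?_, ⟨Lt, ?_⟩, ⟨-Lt + 2 * Lh, ?_⟩⟩
    · rw [hg₂]
      refine Continuous.if_le (by fun_prop) (by fun_prop) continuous_const continuous_id ?_
      rintro x rfl
      simp only [neg_zero, P0, h0]; ring
    · refine hPt.congr' ?_
      filter_upwards [eventually_ge_atTop 0] with x hx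
      exact (g₂pos x hx).symm
    · refine ((hPt.neg.add (hht.const_mul 2)).comp tendsto_neg_atBot_atTop).congr' ?_
      filter_upwards [eventually_le_atBot 0] with x hx
      have := g₂neg (-x) (neg_nonneg.2 hx)
      rw [neg_neg] at this
      exact this.symm
  -- The right-hand side of the identities defining `𝒟_{α,β}` is `h(|x|)`.
  have hconv : ∀ x, g₂ 0 * expa (α + β) x +
      conv (expa (α + β)) (fun y => β * g₂ y - α * g₁ (-y)) x = h |x| := by
    intro x
    have h1 : g₂ 0 * expa (α + β) x +
        conv (expa (α + β)) (fun y => β * g₂ y - α * g₁ (-y)) x =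
        solODE (α + β) fp (fun y => β * g₂ y - α * g₁ (-y)) x := by
      rw [solODE_eq, g₂0]; rfl
    rw [h1]
    rcases le_total 0 x with hx | hx
    · rw [abs_of_nonneg hx, hh, solODE, solODE]
      congr 2
      refine intervalIntegral.integral_congr fun y hy => ?_
      rw [uIcc_of_le hx] at hy
      simp only [hΦ, g₂pos y hy.1, g₁neg y hy.1]
    · rw [abs_of_nonpos hx]
      have h2 := solODE_reflect (α + β) fp (φ := fun y => β * g₂ y - α * g₁ (-y)) hΦc
        (neg_nonneg.2 hx) (fun y hy => by
          rw [← hh]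
          simp only [hΦ, neg_neg, g₂neg y hy, g₁pos y hy]
          ring)
      rw [neg_neg] at h2
      rw [h2, hh]
  refine ⟨⟨hC₁, hC₂, fun x => ?_, fun x => ?_⟩, ?_⟩
  · have h1 : evenPart g₁ x = -h |x| := by
      rcases le_total 0 x with hx | hx
      · rw [abs_of_nonneg hx, evenPart, g₁pos x hx, g₁neg x hx]; ring
      · have hx' := neg_nonneg.2 hx
        have h2 := g₁neg (-x) hx'
        rw [neg_neg] at h2
        rw [abs_of_nonpos hx, evenPart, h2, g₁pos _ hx']; ring
    rw [h1, ← hconv x]; ring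
  · rw [hconv x]
    rcases le_total 0 x with hx | hx
    · rw [abs_of_nonneg hx, evenPart, g₂pos x hx, g₂neg x hx]; ring
    · have hx' := neg_nonneg.2 hx
      have h2 := g₂neg (-x) hx'
      rw [neg_neg] at h2
      rw [abs_of_nonpos hx, evenPart, h2, g₂pos _ hx']; ring
  · refine max_le (ciSup_le fun x => ?_) (ciSup_le fun x => ?_)
    · rcases le_total 0 x with hx | hx
      · rw [g₁pos x hx]
        have h1 := abs_le.1 (hQM x)
        have h2 := abs_le.1 (hhM x hx)
        exact abs_le.2 ⟨by linarith, by linarith⟩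
      · have h2 := g₁neg (-x) (neg_nonneg.2 hx)
        rw [neg_neg] at h2
        rw [h2]
        exact (hQM _).trans (by linarith)
    · rcases le_total 0 x with hx | hx
      · rw [g₂pos x hx]
        exact (hPM _).trans (by linarith)
      · have hx' := neg_nonneg.2 hx
        have h3 := g₂neg (-x) hx'
        rw [neg_neg] at h3
        rw [h3]
        have h1 := abs_le.1 (hPM (-x))
        have h2 := abs_le.1 (hhM (-x) hx')
        exact abs_le.2 ⟨by linarith, by linarith⟩

/-! ### Recovering elements of `𝒟_{α,β}` from their restriction -/

/-- For `x > 0` the convolution in the definition of `𝒟_{α,β}` only sees the restriction. -/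
lemma integral_restr (α β : ℝ) (g₁ g₂ : ℝ → ℝ) {x : ℝ} (hx : 0 < x) :
    (∫ y in (0:ℝ)..x, Real.exp (-((α + β) * (x - y))) *
      (β * restr g₁ g₂ y - α * restr g₁ g₂ (-y))) =
    conv (expa (α + β)) (fun y => β * g₂ y - α * g₁ (-y)) x := by
  refine intervalIntegral.integral_congr_ae (ae_of_all _ fun y hy => ?_)
  rw [uIoc_of_le hx.le] at hy
  simp [restr, expa, hy.1, hy.1.not_gt]

/-- `E⊥_{α,β}` is a (linear) bijection of `𝔛_ov` onto `𝒟_{α,β}`,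
with norm bound `5`, inverted by the restriction operator. -/
theorem statement13 (α β : ℝ) (hα : 0 ≤ α) (hβ : 0 ≤ β) (hαβ : 0 < α + β) :
    (∀ f : ℝ → ℝ, ∀ fm fp : ℝ, memX f →
      Tendsto f (nhdsWithin 0 (Iio 0)) (nhds fm) →
      Tendsto f (nhdsWithin 0 (Ioi 0)) (nhds fp) →
      fm = -fp →
      memDab α β (extPL α β f fm fp) (extPR α β f fp) ∧
      max (Cnorm (extPL α β f fm fp)) (Cnorm (extPR α β f fp)) ≤ 5 * Xnorm f ∧
      (∀ x : ℝ, x ≠ 0 → restr (extPL α β f fm fp) (extPR α β f fp) x = f x)) ∧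
    (∀ g₁ g₂ : ℝ → ℝ, memDab α β g₁ g₂ →
      extPL α β (restr g₁ g₂) (g₁ 0) (g₂ 0) = g₁ ∧
      extPR α β (restr g₁ g₂) (g₂ 0) = g₂) := by
  refine ⟨fun f fm fp hX hm hp hf => ?_, fun g₁ g₂ hg => ?_⟩
  · obtain ⟨h1, h2⟩ := ext_mem_and_bound hα hβ hαβ hX hm hp hf
    refine ⟨h1, h2, fun x hx => ?_⟩
    rcases lt_or_gt_of_ne hx with hx | hx
    · simp [restr, extPL, hx]
    · simp [restr, extPR, hx, hx.not_gt]
  · obtain ⟨-, -, h1, h2⟩ := hg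
    constructor
    · funext x
      rcases lt_trichotomy x 0 with hx | rfl | hx
      · simp [extPL, restr, hx]
      · simp [extPL]
      · have h3 := h1 x
        simp only [extPL, hx.not_gt, hx.ne', if_false, integral_restr α β g₁ g₂ hx]
        simp only [restr, neg_lt_zero.2 hx, if_true]
        simp only [evenPart] at h3
        simp only [expa] at h3 ⊢
        linarith
    · funext x
      rcases lt_trichotomy x 0 with hx | rfl | hx
      · have hx' := neg_pos.2 hx
        have h3 := h2 (-x)
        simp only [extPR, hx.not_gt, hx.ne, if_false, integral_restr α β g₁ g₂ hx']
        simp only [restr, hx'.not_gt, if_false]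
        simp only [evenPart, neg_neg] at h3
        simp only [expa] at h3 ⊢
        linarith
      · simp [extPR]
      · simp [extPR, restr, hx, hx.not_gt]
end
end

section
/- Fix α, β ≥ 0 with α + β > 0, and define the snapping-out cosine family Cos_{α,β}(t) := R ∘ C_D(t) ∘ E_{α,β} on 𝔛. Then the families are equibounded by 5: for every t ∈ ℝ and every f ∈ 𝔛, ‖Cos_{α,β}(t) f‖_∞ ≤ 5‖f‖_∞. -/
/-!
Every `f ∈ 𝔛` is bounded off `0` by `M = Xnorm f`. The integrals in the extension formulas are at
most `2M ∫₀ˣ e^{-(α+β)(x-y)} dy ≤ 2M / (α+β)` in absolute value (`abs_convolution_le`), so both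
extensions are bounded by `M + 4M α/(α+β) ≤ 5M`, respectively `M + 4M β/(α+β) ≤ 5M`. Averaging two
translates and restricting to half-lines does not increase the bound.
-/

open Filter Topology MeasureTheory Set intervalIntegral

noncomputable section

/-- the extension `f̃_ℓ` of the left part of `f ∈ 𝔛`; `fm` is the one-sided limit `f(0-)` -/
def extL (α β : ℝ) (f : ℝ → ℝ) (fm : ℝ) : ℝ → ℝ := fun x =>
  if x < 0 then f x
  else if x = 0 then fm
  else f (-x) + 2 * α * ∫ y in (0:ℝ)..x, Real.exp (-((α + β) * (x - y))) * (f y - f (-y))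

/-- the extension `f̃_r` of the right part of `f ∈ 𝔛`; `fp` is the one-sided limit `f(0+)` -/
def extR (α β : ℝ) (f : ℝ → ℝ) (fp : ℝ) : ℝ → ℝ := fun x =>
  if 0 < x then f x
  else if x = 0 then fp
  else f (-x) - 2 * β * ∫ y in (0:ℝ)..(-x), Real.exp (-((α + β) * (-x - y))) * (f y - f (-y))

/-- One half of the boundedness of `f ∈ 𝔛`; the other half follows by reflection. -/
lemma bounded_on_Ioi {f : ℝ → ℝ} (hc : ContinuousOn f (Ioi 0)) {L₀ L₁ : ℝ}
    (h0 : Tendsto f (nhdsWithin 0 (Ioi 0)) (nhds L₀)) (h1 : Tendsto f atTop (nhds L₁)) :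
    ∃ K, ∀ x, 0 < x → |f x| ≤ K := by
  have e0 : ∀ᶠ x in nhdsWithin 0 (Ioi 0), |f x| < |L₀| + 1 :=
    h0.abs.eventually_lt_const (by linarith)
  have e1 : ∀ᶠ x in atTop, |f x| < |L₁| + 1 := h1.abs.eventually_lt_const (by linarith)
  obtain ⟨a, ha, hea⟩ := mem_nhdsGT_iff_exists_Ioo_subset.mp e0
  obtain ⟨b, hb⟩ := eventually_atTop.mp e1
  have ha' : 0 < a := ha
  obtain ⟨K, hK⟩ := (isCompact_Icc (a := a) (b := b)).exists_bound_of_continuousOn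
    (hc.mono fun x hx => lt_of_lt_of_le ha' hx.1)
  refine ⟨max K (max (|L₀| + 1) (|L₁| + 1)), fun x hx => ?_⟩
  rcases lt_or_ge x a with hxa | hxa
  · exact le_max_of_le_right (le_max_of_le_left (le_of_lt (hea ⟨hx, hxa⟩)))
  rcases le_or_gt x b with hxb | hxb
  · exact le_max_of_le_left (hK x ⟨hxa, hxb⟩)
  · exact le_max_of_le_right (le_max_of_le_right (hb x hxb.le).le)

/-- The supremum defining `Xnorm f` is over a bounded set, so it is an honest bound for `f`. -/
lemma abs_le_Xnorm {f : ℝ → ℝ} (hf : memX f) {x : ℝ} (hx : x ≠ 0) : |f x| ≤ Xnorm f := by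
  obtain ⟨hcl, hcr, ⟨l₁, h₁⟩, ⟨l₂, h₂⟩, ⟨l₃, h₃⟩, ⟨l₄, h₄⟩⟩ := hf
  obtain ⟨K₁, hK₁⟩ := bounded_on_Ioi hcr h₂ h₃
  have hneg : Tendsto (fun x : ℝ => -x) (nhdsWithin 0 (Ioi 0)) (nhdsWithin 0 (Iio 0)) := by
    simpa using tendsto_neg_nhdsGT (a := (0 : ℝ))
  obtain ⟨K₂, hK₂⟩ := bounded_on_Ioi (f := fun x => f (-x))
    (hcl.comp continuous_neg.continuousOn fun x hx => mem_Iio.mpr (neg_lt_zero.mpr hx))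
    (h₁.comp hneg) (h₄.comp tendsto_neg_atTop_atBot)
  have hbdd : BddAbove (range fun x : {y : ℝ // y ≠ 0} => |f x.1|) := by
    refine ⟨max K₁ K₂, ?_⟩
    rintro _ ⟨⟨y, hy⟩, rfl⟩
    rcases lt_or_gt_of_ne hy with h | h
    · exact le_max_of_le_right (by simpa using hK₂ (-y) (by linarith))
    · exact le_max_of_le_left (hK₁ y h)
  exact le_ciSup hbdd (⟨x, hx⟩ : {y : ℝ // y ≠ 0})

lemma abs_convolution_le {c M : ℝ} (hc : 0 < c) {f : ℝ → ℝ} (hM : ∀ x, x ≠ 0 → |f x| ≤ M)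
    {x : ℝ} (hx : 0 < x) :
    |∫ y in (0:ℝ)..x, Real.exp (-(c * (x - y))) * (f y - f (-y))| ≤ 2 * M / c := by
  have hM0 : 0 ≤ M := (abs_nonneg _).trans (hM 1 one_ne_zero)
  have hcont : Continuous fun y : ℝ => Real.exp (-(c * (x - y))) * (2 * M) := by fun_prop
  have hint : ∫ y in (0:ℝ)..x, Real.exp (-(c * (x - y))) * (2 * M)
      = (1 - Real.exp (-(c * x))) * (2 * M) / c := by
    have hd : ∀ y ∈ uIcc 0 x, HasDerivAt
        (fun y => Real.exp (-(c * (x - y))) * (2 * M) / c)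
        (Real.exp (-(c * (x - y))) * (2 * M)) y := by
      intro y _
      have h := (((((hasDerivAt_id y).const_sub x).const_mul c).neg.exp).mul_const
        (2 * M)).div_const c
      refine h.congr_deriv ?_
      rw [div_eq_iff hc.ne', Pi.neg_apply]
      simp only [id]
      ring
    rw [integral_eq_sub_of_hasDerivAt hd
      (hcont.intervalIntegrable _ _)]
    simp
    ring
  calc |∫ y in (0:ℝ)..x, Real.exp (-(c * (x - y))) * (f y - f (-y))|
      ≤ ∫ y in (0:ℝ)..x, Real.exp (-(c * (x - y))) * (2 * M) := by
        rw [← Real.norm_eq_abs]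
        refine norm_integral_le_of_norm_le hx.le (Eventually.of_forall fun y hy => ?_)
          (hcont.intervalIntegrable _ _)
        rw [Real.norm_eq_abs, abs_mul, Real.abs_exp]
        have h1 := hM y hy.1.ne'
        have h2 := hM (-y) (neg_ne_zero.mpr hy.1.ne')
        have h3 := abs_sub (f y) (f (-y))
        gcongr
        linarith
    _ ≤ 2 * M / c := by
        rw [hint]
        refine div_le_div_of_nonneg_right ?_ hc.le
        have := (Real.exp_pos (-(c * x))).le
        nlinarith

/-- The common estimate for both extensions: `a` is `α` or `β`, and `c` is `α + β`. -/
lemma two_mul_mul_le {a c M I : ℝ} (ha : 0 ≤ a) (hac : a ≤ c) (hc : 0 < c)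
    (hI : |I| ≤ 2 * M / c) : |2 * a * I| ≤ 4 * M := by
  rw [abs_mul, abs_of_nonneg (by positivity)]
  calc 2 * a * |I| ≤ 2 * c * (2 * M / c) := by gcongr
    _ = 4 * M := by field_simp; ring

lemma abs_extL_le {α β M : ℝ} (hα : 0 ≤ α) (hβ : 0 ≤ β) (hαβ : 0 < α + β) {f : ℝ → ℝ} {fm : ℝ}
    (hM : ∀ x, x ≠ 0 → |f x| ≤ M) (hfm : |fm| ≤ M) (x : ℝ) : |extL α β f fm x| ≤ 5 * M := by
  have hM0 : 0 ≤ M := (abs_nonneg _).trans hfm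
  unfold extL
  split_ifs with h1 h2
  · linarith [hM x h1.ne]
  · linarith
  · have hx : 0 < x := lt_of_le_of_ne (not_lt.mp h1) (Ne.symm h2)
    have h3 := two_mul_mul_le hα (by linarith) hαβ (abs_convolution_le hαβ hM hx)
    exact (abs_add_le _ _).trans (by linarith [hM (-x) (neg_ne_zero.mpr h2)])

lemma abs_extR_le {α β M : ℝ} (hα : 0 ≤ α) (hβ : 0 ≤ β) (hαβ : 0 < α + β) {f : ℝ → ℝ} {fp : ℝ}
    (hM : ∀ x, x ≠ 0 → |f x| ≤ M) (hfp : |fp| ≤ M) (x : ℝ) : |extR α β f fp x| ≤ 5 * M := by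
  have hM0 : 0 ≤ M := (abs_nonneg _).trans hfp
  unfold extR
  split_ifs with h1 h2
  · linarith [hM x h1.ne']
  · linarith
  · have hx : 0 < -x := neg_pos.mpr (lt_of_le_of_ne (not_lt.mp h1) h2)
    have h3 := two_mul_mul_le hβ (by linarith) hαβ (abs_convolution_le hαβ hM hx)
    exact (abs_sub _ _).trans (by linarith [hM (-x) (neg_ne_zero.mpr h2)])

lemma abs_cosF_le {g : ℝ → ℝ} {K : ℝ} (hg : ∀ x, |g x| ≤ K) (t x : ℝ) : |cosF t g x| ≤ K := by
  have h1 := abs_le.mp (hg (x + t))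
  have h2 := abs_le.mp (hg (x - t))
  unfold cosF
  exact abs_le.mpr ⟨by linarith, by linarith⟩

/-- the snapping-out cosine families `Cos_{α,β}(t) = R ∘ C_D(t) ∘ E_{α,β}`
are equibounded by `5`. -/
theorem statement14 (α β : ℝ) (hα : 0 ≤ α) (hβ : 0 ≤ β) (hαβ : 0 < α + β)
    (t : ℝ) (f : ℝ → ℝ) (fm fp : ℝ) (hf : memX f)
    (hfm : Tendsto f (nhdsWithin 0 (Iio 0)) (nhds fm))
    (hfp : Tendsto f (nhdsWithin 0 (Ioi 0)) (nhds fp)) :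
    Xnorm (restr (cosF t (extL α β f fm)) (cosF t (extR α β f fp))) ≤ 5 * Xnorm f := by
  have hM : ∀ x, x ≠ 0 → |f x| ≤ Xnorm f := fun x hx => abs_le_Xnorm hf hx
  have hm : |fm| ≤ Xnorm f := le_of_tendsto hfm.abs
    (eventually_nhdsWithin_of_forall fun x hx => hM x (ne_of_lt hx))
  have hp : |fp| ≤ Xnorm f := le_of_tendsto hfp.abs
    (eventually_nhdsWithin_of_forall fun x hx => hM x (ne_of_gt hx))
  have : Nonempty {y : ℝ // y ≠ 0} := ⟨⟨1, one_ne_zero⟩⟩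
  refine ciSup_le fun x => ?_
  unfold restr
  split_ifs
  · exact abs_cosF_le (abs_extL_le hα hβ hαβ hM hm) t x
  · exact abs_cosF_le (abs_extR_le hα hβ hαβ hM hp) t x
end
end

section
/- Fix α, β ≥ 0 with α + β > 0. For every f ∈ 𝔛 with f(0−) = f(0+) (i.e., f extends to a member of C[-∞,∞]), the extensions converge: lim_{n→∞} E_{nα,nβ} f = E^skew_{α,β} f in the norm of 𝒞, where E^skew_{α,β} f := (f̃_ℓ, f̃_r) with f̃_ℓ(x) = f(x) for x ≤ 0, f̃_ℓ(x) = ((β−α)/(α+β))·f(−x) + (2α/(α+β))·f(x) for x > 0, and f̃_r(x) = f(x) for x ≥ 0, f̃_r(x) = (2β/(α+β))·f(x) + ((α−β)/(α+β))·f(−x) for x < 0 (the value of f at 0 meaning the common one-sided limit). -/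
/-!
Write `g y = f y - f (-y)` for `y > 0` and `c = n (α + β)`. On the half-line where an extension is
not simply `f`, its difference from the skew extension is, up to sign, `2α/(α+β)` or `2β/(α+β)`
times `c ∫₀ˣ exp (-c (x - y)) g y dy - g x`. So it suffices that the exponential kernels are an
approximate identity on `g`, uniformly in `x > 0` (`gap_uniform`).

Reflected evenly, `g` is continuous on the line (with value `0` at the origin, since
`f(0-) = f(0+)`) and has one limit along the cocompact filter. It is therefore bounded and
uniformly continuous, so for every `ε` there is `K` with `|g y - g x| ≤ ε + K |x - y|`
(`exists_affine_modulus`). Integrating this affine bound against the kernel, and bounding the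
missing mass `exp (-c x)` times `|g x| ≤ ε + K x`, gives the error `ε + K / c` independently of `x`
(`kernel_estimate`).
-/

open Filter Topology MeasureTheory Set intervalIntegral

noncomputable section

/-- left coordinate of the skew extension operator `E^skew_{α,β}`; `f0` is the common
one-sided limit of `f` at `0` -/
def extSkewL (α β : ℝ) (f : ℝ → ℝ) (f0 : ℝ) : ℝ → ℝ := fun x =>
  if x < 0 then f x
  else if x = 0 then f0
  else ((β - α) / (α + β)) * f (-x) + (2 * α / (α + β)) * f x

/-- right coordinate of the skew extension operator `E^skew_{α,β}` -/
def extSkewR (α β : ℝ) (f : ℝ → ℝ) (f0 : ℝ) : ℝ → ℝ := fun x =>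
  if 0 < x then f x
  else if x = 0 then f0
  else (2 * β / (α + β)) * f x + ((α - β) / (α + β)) * f (-x)

/-- The difference of the two branches of `f`, reflected to an even function of `y`. It agrees with
`f y - f (-y)` for `y ≥ 0` and vanishes at `0` whatever the value `f 0` is. -/
def evenGap (f : ℝ → ℝ) : ℝ → ℝ := fun y => f |y| - f (-|y|)

/-- The gap is continuous at `0` because the one-sided limits of `f` there agree. -/
lemma evenGap_continuous {f : ℝ → ℝ} {c : ℝ} (h1 : ContinuousOn f (Iio 0))
    (h2 : ContinuousOn f (Ioi 0)) (hm : Tendsto f (𝓝[<] 0) (𝓝 c))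
    (hp : Tendsto f (𝓝[>] 0) (𝓝 c)) : Continuous (evenGap f) := by
  rw [continuous_iff_continuousAt]
  intro x
  by_cases hx : x = 0
  · subst hx
    rw [continuousAt_iff_punctured_nhds]
    have ha : Tendsto (fun y : ℝ => |y|) (𝓝[≠] 0) (𝓝[>] 0) := by
      refine tendsto_nhdsWithin_iff.2 ⟨?_, ?_⟩
      · have : Tendsto (fun y : ℝ => |y|) (𝓝 0) (𝓝 |0|) := continuous_abs.continuousAt
        rw [abs_zero] at this
        exact this.mono_left nhdsWithin_le_nhds
      · filter_upwards [self_mem_nhdsWithin] with y hy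
        exact abs_pos.2 hy
    have hb : Tendsto (fun y : ℝ => -|y|) (𝓝[≠] 0) (𝓝[<] 0) := by
      have h := ha
      rw [tendsto_nhdsWithin_iff] at h ⊢
      refine ⟨by simpa using h.1.neg, ?_⟩
      filter_upwards [h.2] with y hy
      exact neg_lt_zero.2 (mem_Ioi.1 hy)
    have := (hp.comp ha).sub (hm.comp hb)
    rw [sub_self] at this
    have hz : evenGap f 0 = 0 := by simp [evenGap]
    rw [hz]
    exact this
  · have hpos : 0 < |x| := abs_pos.2 hx
    have ha : ContinuousAt (fun y : ℝ => |y|) x := continuous_abs.continuousAt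
    have c2 : ContinuousAt f |x| := h2.continuousAt (Ioi_mem_nhds hpos)
    have c1 : ContinuousAt f (-|x|) := h1.continuousAt (Iio_mem_nhds (neg_lt_zero.2 hpos))
    exact (ContinuousAt.comp (f := fun y : ℝ => |y|) c2 ha).sub
      (ContinuousAt.comp (f := fun y : ℝ => -|y|) c1 ha.neg)

/-- Being even, the gap has the same limit at `+∞` and `-∞`. -/
lemma evenGap_tendsto {f : ℝ → ℝ} (h1 : ∃ L, Tendsto f atTop (𝓝 L))
    (h2 : ∃ L, Tendsto f atBot (𝓝 L)) : ∃ L, Tendsto (evenGap f) (cocompact ℝ) (𝓝 L) := by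
  obtain ⟨L, hL⟩ := h1
  obtain ⟨M, hM⟩ := h2
  have ha : Tendsto (fun y : ℝ => |y|) (cocompact ℝ) atTop := tendsto_norm_cocompact_atTop
  exact ⟨L - M, (hL.comp ha).sub (hM.comp (tendsto_neg_atTop_atBot.comp ha))⟩

/-- A continuous function with a limit along the cocompact filter has an affine modulus of
continuity with arbitrarily small constant term. -/
lemma exists_affine_modulus {H : ℝ → ℝ} (hc : Continuous H)
    (hl : ∃ L, Tendsto H (cocompact ℝ) (𝓝 L)) {ε : ℝ} (hε : 0 < ε) :
    ∃ K, 0 ≤ K ∧ ∀ x y, |H y - H x| ≤ ε + K * |x - y| := by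
  obtain ⟨L, hL⟩ := hl
  have hu : UniformContinuous H := hc.uniformContinuous_of_tendsto_cocompact hL
  obtain ⟨δ, hδ, hd⟩ := Metric.uniformContinuous_iff.1 hu ε hε
  obtain ⟨M, hM⟩ : ∃ M, ∀ x, |H x| ≤ M := by
    obtain ⟨t, ht, hts⟩ := mem_cocompact.1 (hL (Metric.ball_mem_nhds L one_pos))
    obtain ⟨C, hC⟩ := ht.exists_bound_of_continuousOn hc.continuousOn
    refine ⟨max C (|L| + 1), fun x => ?_⟩
    by_cases hx : x ∈ t
    · exact (hC x hx).trans (le_max_left _ _)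
    · refine le_trans ?_ (le_max_right _ _)
      have h := hts hx
      simp only [mem_preimage, Metric.mem_ball, Real.dist_eq] at h
      have := abs_sub_abs_le_abs_sub (H x) L
      linarith
  have hM0 : 0 ≤ M := (abs_nonneg _).trans (hM 0)
  refine ⟨2 * M / δ, by positivity, fun x y => ?_⟩
  rcases lt_or_ge |x - y| δ with h | h
  · have h' := hd (a := y) (b := x) (by rwa [Real.dist_eq, abs_sub_comm])
    rw [Real.dist_eq] at h'
    have : 0 ≤ 2 * M / δ * |x - y| := by positivity
    linarith
  · have h1 : |H y - H x| ≤ 2 * M := by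
      have := abs_sub (H y) (H x)
      linarith [hM x, hM y]
    have h2 : 2 * M ≤ 2 * M / δ * |x - y| := by
      rw [div_mul_eq_mul_div, le_div_iff₀ hδ]
      gcongr
    linarith

/-- The exponential kernel of rate `c` approximates `H x` with an error controlled by the affine
modulus. The defect `exp (-c x)` of the kernel's mass is harmless because `H 0 = 0`. -/
lemma kernel_estimate {H : ℝ → ℝ} (hc : Continuous H) (h0 : H 0 = 0) {ε K c x : ℝ}
    (hK : 0 ≤ K) (hm : ∀ x y, |H y - H x| ≤ ε + K * |x - y|)
    (hcpos : 0 < c) (hx : 0 < x) :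
    |c * (∫ y in (0:ℝ)..x, Real.exp (-(c * (x - y))) * H y) - H x| ≤ ε + K / c := by
  have hderiv : ∀ a b : ℝ, ∀ y, HasDerivAt
      (fun y => Real.exp (-(c * (x - y))) * (a + b * (x - y) + b / c))
      (c * (Real.exp (-(c * (x - y))) * (a + b * (x - y)))) y := by
    intro a b y
    have h1 : HasDerivAt (fun y => x - y) (-1) y := by
      simpa using (hasDerivAt_id y).const_sub x
    have h2 := ((h1.const_mul c).neg).exp
    have h3 := ((h1.const_mul b).const_add a).add_const (b / c)
    refine (h2.mul h3).congr_deriv ?_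
    simp only [Pi.neg_apply]
    field_simp
    ring
  have hint : ∀ a b : ℝ, c * (∫ y in (0:ℝ)..x, Real.exp (-(c * (x - y))) * (a + b * (x - y)))
      = (a + b / c) - Real.exp (-(c * x)) * (a + b * x + b / c) := by
    intro a b
    rw [← intervalIntegral.integral_const_mul,
      intervalIntegral.integral_eq_sub_of_hasDerivAt (fun y _ => hderiv a b y)
        (Continuous.intervalIntegrable (by fun_prop) _ _)]
    simp
  -- Split off the kernel's mass, `1 - exp (-c x)`, which multiplies `H x`.
  have hsplit : c * (∫ y in (0:ℝ)..x, Real.exp (-(c * (x - y))) * H y) - H x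
      = c * (∫ y in (0:ℝ)..x, Real.exp (-(c * (x - y))) * (H y - H x))
        - Real.exp (-(c * x)) * H x := by
    have h1 := hint (H x) 0
    have h2 : (∫ y in (0:ℝ)..x, Real.exp (-(c * (x - y))) * (H y - H x))
        = (∫ y in (0:ℝ)..x, Real.exp (-(c * (x - y))) * H y)
          - ∫ y in (0:ℝ)..x, Real.exp (-(c * (x - y))) * (H x + 0 * (x - y)) := by
      rw [← intervalIntegral.integral_sub (Continuous.intervalIntegrable (by fun_prop) _ _)
        (Continuous.intervalIntegrable (by fun_prop) _ _)]
      congr 1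
      ext y
      ring
    rw [h2, mul_sub, h1]
    ring
  have hA : |∫ y in (0:ℝ)..x, Real.exp (-(c * (x - y))) * (H y - H x)|
      ≤ ∫ y in (0:ℝ)..x, Real.exp (-(c * (x - y))) * (ε + K * (x - y)) := by
    rw [← Real.norm_eq_abs]
    refine intervalIntegral.norm_integral_le_of_norm_le hx.le (Eventually.of_forall ?_)
      (Continuous.intervalIntegrable (by fun_prop) _ _)
    intro y hy
    rw [Real.norm_eq_abs, abs_mul, abs_of_pos (Real.exp_pos _)]
    have := hm x y
    rw [abs_of_nonneg (sub_nonneg.2 hy.2)] at this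
    gcongr
  have hB : |H x| ≤ ε + K * x := by
    have := hm x 0
    rwa [h0, zero_sub, abs_neg, sub_zero, abs_of_pos hx] at this
  have hE := Real.exp_pos (-(c * x))
  calc _ ≤ c * |∫ y in (0:ℝ)..x, Real.exp (-(c * (x - y))) * (H y - H x)|
        + Real.exp (-(c * x)) * |H x| := by
        rw [hsplit]
        refine (abs_sub _ _).trans_eq ?_
        rw [abs_mul, abs_mul, abs_of_pos hcpos, abs_of_pos hE]
    _ ≤ c * (∫ y in (0:ℝ)..x, Real.exp (-(c * (x - y))) * (ε + K * (x - y)))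
        + Real.exp (-(c * x)) * (ε + K * x) := by gcongr
    _ = ε + K / c - Real.exp (-(c * x)) * (K / c) := by rw [hint]; ring
    _ ≤ ε + K / c := by
        have : 0 ≤ Real.exp (-(c * x)) * (K / c) := by positivity
        linarith

/-- Convolution with the exponential kernels of rate `n s` is an approximate identity on the gap,
uniformly on the open half-line. -/
lemma gap_uniform {f : ℝ → ℝ} (hc : Continuous (evenGap f))
    (hl : ∃ L, Tendsto (evenGap f) (cocompact ℝ) (𝓝 L)) {s : ℝ} (hs : 0 < s) {η : ℝ}
    (hη : 0 < η) : ∀ᶠ n : ℕ in atTop, ∀ x, 0 < x →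
      |(n * s) * (∫ y in (0:ℝ)..x, Real.exp (-((n * s) * (x - y))) * (f y - f (-y)))
        - (f x - f (-x))| < η := by
  obtain ⟨K, hK, hm⟩ := exists_affine_modulus hc hl (half_pos hη)
  have ht : Tendsto (fun n : ℕ => (n : ℝ) * s) atTop atTop :=
    tendsto_natCast_atTop_atTop.atTop_mul_const hs
  have ht' : Tendsto (fun n : ℕ => K / ((n : ℝ) * s)) atTop (𝓝 0) := ht.const_div_atTop K
  filter_upwards [ht.eventually_gt_atTop 0, ht'.eventually_lt_const (half_pos hη)]
    with n hn hn' x hx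
  have h := kernel_estimate hc (by simp [evenGap]) hK hm hn hx
  have e1 : evenGap f x = f x - f (-x) := by simp [evenGap, abs_of_pos hx]
  have e2 : (∫ y in (0:ℝ)..x, Real.exp (-((n * s) * (x - y))) * evenGap f y)
      = ∫ y in (0:ℝ)..x, Real.exp (-((n * s) * (x - y))) * (f y - f (-y)) := by
    refine intervalIntegral.integral_congr fun y hy => ?_
    rw [uIcc_of_le hx.le] at hy
    simp [evenGap, abs_of_nonneg hy.1]
  rw [e1, e2] at h
  linarith

/-- for `f ∈ 𝔛` with `f(0-) = f(0+)`, the extensions `E_{nα,nβ} f` converge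
uniformly (i.e. in the norm of `𝒞`) to `E^skew_{α,β} f`. -/
theorem statement15 (α β : ℝ) (hα : 0 ≤ α) (hβ : 0 ≤ β) (hαβ : 0 < α + β)
    (f : ℝ → ℝ) (fm fp : ℝ) (hf : memX f)
    (hfm : Tendsto f (nhdsWithin 0 (Iio 0)) (nhds fm))
    (hfp : Tendsto f (nhdsWithin 0 (Ioi 0)) (nhds fp))
    (heq : fm = fp) :
    TendstoUniformly (fun (n : ℕ) (x : ℝ) => extL ((n : ℝ) * α) ((n : ℝ) * β) f fm x)
      (extSkewL α β f fm) atTop ∧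
    TendstoUniformly (fun (n : ℕ) (x : ℝ) => extR ((n : ℝ) * α) ((n : ℝ) * β) f fp x)
      (extSkewR α β f fp) atTop := by
  subst heq
  obtain ⟨h1, h2, -, -, h5, h6⟩ := hf
  have hc := evenGap_continuous h1 h2 hfm hfp
  have hl := evenGap_tendsto h5 h6
  rw [Metric.tendstoUniformly_iff, Metric.tendstoUniformly_iff]
  -- The weights `2α/(α+β)` and `2β/(α+β)` are at most `2`, so accuracy `ε/2` on the gap suffices.
  have hw : ∀ {γ ε t : ℝ}, 0 ≤ γ → γ ≤ α + β → 0 < ε → |t| < ε / 2 →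
      |2 * γ / (α + β) * t| < ε := by
    intro γ ε t hγ hγ' hε ht
    have hle : 2 * γ / (α + β) ≤ 2 := by
      rw [div_le_iff₀ hαβ]
      linarith
    rw [abs_mul, abs_of_nonneg (by positivity)]
    have := mul_le_mul_of_nonneg_right hle (abs_nonneg t)
    linarith
  refine ⟨fun ε hε => ?_, fun ε hε => ?_⟩
  · filter_upwards [gap_uniform hc hl hαβ (half_pos hε)] with n hn x
    rw [dist_comm, Real.dist_eq]
    unfold extL extSkewL
    split_ifs with hx hx'
    · simpa using hε
    · simpa using hε
    · have hx0 : 0 < x := lt_of_le_of_ne (not_lt.1 hx) (Ne.symm hx')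
      refine lt_of_eq_of_lt (congrArg _ ?_) (hw hα (by linarith) hε (hn x hx0))
      rw [mul_add]
      field_simp
      ring
  · filter_upwards [gap_uniform hc hl hαβ (half_pos hε)] with n hn x
    rw [Real.dist_eq]
    unfold extR extSkewR
    split_ifs with hx hx'
    · simpa using hε
    · simpa using hε
    · have hx0 : 0 < -x := neg_pos.2 (lt_of_le_of_ne (not_lt.1 hx) hx')
      refine lt_of_eq_of_lt (congrArg _ ?_) (hw hβ (by linarith) hε (hn (-x) hx0))
      rw [mul_add, neg_neg]
      field_simp
      ring
end
end

section
/- Fix α, β ≥ 0 with α + β > 0. For every f ∈ 𝔛 with f(0−) = f(0+), the snapping-out cosine families converge uniformly in time to the skew Brownian motion cosine family: lim_{n→∞} sup_{t ∈ ℝ} ‖(R ∘ C_D(t) ∘ E_{nα,nβ}) f − (R ∘ C_D(t) ∘ E^skew_{α,β}) f‖_∞ = 0. -/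
/-!
The cosine family `C(t)` averages two translates, so it is a contraction for the supremum norm, and
it suffices to prove that the extensions converge uniformly on the line (`abs_cosF_sub_le`). On the
half-line where they are not equal, the two extensions differ by
`± 2γ/(α+β) * (c ∫₀ˣ e^{-c(x-y)} g(y) dy - g(x))` with `γ ∈ {α, β}`, `c = n(α+β)` and
`g(y) = f(y) - f(-y)`. Since `f(0-) = f(0+)`, the function `g` extends continuously by `0` to the
origin; having a limit at infinity, it is bounded and uniformly continuous, whence
`|g(y) - g(x)| ≤ ε + K|y - x|` (`exists_modulus`). Integrating this bound against the
exponential kernel gives an error of at most `ε + K/c`, uniformly in `x` (`approx_identity`).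
-/

open Filter Topology MeasureTheory Set intervalIntegral

noncomputable section

/-- The jump function `y ↦ f(|y|) - f(-|y|)`, patched by the value `0` at `0`. The absolute value
makes its limits at `±∞` coincide, which gives uniform continuity on the whole line. -/
def jump (f : ℝ → ℝ) : ℝ → ℝ := Function.update (fun y => f |y| - f (-|y|)) 0 0

theorem jump_zero (f : ℝ → ℝ) : jump f 0 = 0 := by simp [jump]

theorem jump_pos (f : ℝ → ℝ) {y : ℝ} (hy : 0 < y) : jump f y = f y - f (-y) := by
  simp [jump, hy.ne', abs_of_pos hy]

theorem jump_continuous {f : ℝ → ℝ} {f0 : ℝ} (hf : memX f)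
    (hfm : Tendsto f (𝓝[<] 0) (𝓝 f0)) (hfp : Tendsto f (𝓝[>] 0) (𝓝 f0)) :
    Continuous (jump f) := by
  rw [continuous_iff_continuousAt]
  intro x
  by_cases hx : x = 0
  · subst hx
    rw [jump, continuousAt_update_same]
    have h0 : Tendsto (fun y : ℝ => |y|) (𝓝[≠] 0) (𝓝[>] 0) := by
      refine tendsto_nhdsWithin_iff.2 ⟨?_, ?_⟩
      · have : Tendsto (fun y : ℝ => |y|) (𝓝 0) (𝓝 |0|) := continuous_abs.tendsto 0
        rw [abs_zero] at this
        exact this.mono_left nhdsWithin_le_nhds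
      · filter_upwards [self_mem_nhdsWithin] with y hy
        exact abs_pos.2 hy
    have h1 : Tendsto (fun y : ℝ => -|y|) (𝓝[≠] 0) (𝓝[<] 0) := by
      rw [tendsto_nhdsWithin_iff] at h0 ⊢
      refine ⟨by simpa using h0.1.neg, ?_⟩
      filter_upwards [h0.2] with y hy
      exact neg_lt_zero.2 (mem_Ioi.1 hy)
    simpa using (hfp.comp h0).sub (hfm.comp h1)
  · rw [jump, continuousAt_update_of_ne hx]
    have hp : 0 < |x| := abs_pos.2 hx
    have h1 : ContinuousAt f |x| := hf.2.1.continuousAt (Ioi_mem_nhds hp)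
    have h2 : ContinuousAt f (-|x|) := hf.1.continuousAt (Iio_mem_nhds (neg_lt_zero.2 hp))
    exact (ContinuousAt.comp (f := fun y : ℝ => |y|) h1 continuous_abs.continuousAt).sub
      (ContinuousAt.comp (f := fun y : ℝ => -|y|) h2 continuous_abs.neg.continuousAt)

theorem jump_tendsto {f : ℝ → ℝ} (hf : memX f) :
    ∃ L, Tendsto (jump f) (cocompact ℝ) (𝓝 L) := by
  obtain ⟨-, -, -, -, ⟨A, hA⟩, ⟨B, hB⟩⟩ := hf
  refine ⟨A - B, ?_⟩
  have h0 : Tendsto (fun y : ℝ => |y|) (cocompact ℝ) atTop := tendsto_norm_cocompact_atTop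
  have h1 := (hA.comp h0).sub (hB.comp (tendsto_neg_atTop_atBot.comp h0))
  refine h1.congr' ?_
  have : ∀ᶠ y : ℝ in cocompact ℝ, y ≠ 0 := by
    filter_upwards [h0.eventually_gt_atTop 0] with y hy
    exact abs_pos.1 hy
  filter_upwards [this] with y hy
  simp [jump, hy]

/-- A quantitative form of uniform continuity: large increments are absorbed by a linear term,
since a function continuous on the one-point compactification of the line is bounded. -/
theorem exists_modulus {g : ℝ → ℝ} (hg : Continuous g) {L : ℝ}
    (hL : Tendsto g (cocompact ℝ) (𝓝 L)) {ε : ℝ} (hε : 0 < ε) :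
    ∃ K, 0 ≤ K ∧ ∀ x y, |g y - g x| ≤ ε + K * |y - x| := by
  have hu := hg.uniformContinuous_of_tendsto_cocompact hL
  obtain ⟨δ, hδ, h⟩ := Metric.uniformContinuous_iff.1 hu ε hε
  obtain ⟨M, hM⟩ : ∃ M, ∀ x, |g x| ≤ M := by
    let Z : ZeroAtInftyContinuousMap ℝ ℝ :=
      ⟨⟨fun x => g x - L, by fun_prop⟩, by simpa using hL.sub_const L⟩
    refine ⟨‖Z.toBCF‖ + |L|, fun x => ?_⟩
    have h1 : |g x - L| ≤ ‖Z.toBCF‖ := Z.toBCF.norm_coe_le_norm x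
    calc |g x| = |(g x - L) + L| := by ring_nf
      _ ≤ _ := (abs_add_le _ _).trans (by linarith)
  have hM0 : 0 ≤ M := (abs_nonneg _).trans (hM 0)
  refine ⟨2 * M / δ, by positivity, fun x y => ?_⟩
  by_cases hxy : |y - x| < δ
  · have := h (a := y) (b := x) hxy
    rw [Real.dist_eq] at this
    have : 0 ≤ 2 * M / δ * |y - x| := by positivity
    linarith
  · push Not at hxy
    have h1 : |g y - g x| ≤ 2 * M := (abs_sub _ _).trans (by linarith [hM x, hM y])
    have h2 : 2 * M ≤ 2 * M / δ * |y - x| := by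
      rw [div_mul_eq_mul_div, le_div_iff₀ hδ]
      gcongr
    linarith

/-- The exponential kernels `c e^{-c y}` form an approximate identity, with an explicit rate. The
vanishing of `g` at `0` compensates for the mass `e^{-c x}` of the kernel lying beyond `x`. -/
theorem approx_identity {g : ℝ → ℝ} (hg : Continuous g) (h0 : g 0 = 0) {ε K c x : ℝ}
    (hK : 0 ≤ K) (hc : 0 < c) (hx : 0 ≤ x) (hmod : ∀ x y, |g y - g x| ≤ ε + K * |y - x|) :
    |c * (∫ y in (0:ℝ)..x, Real.exp (-(c * (x - y))) * g y) - g x| ≤ ε + K / c := by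
  have hker : ∫ y in (0:ℝ)..x, c * Real.exp (-(c * (x - y))) = 1 - Real.exp (-(c * x)) := by
    have := integral_eq_sub_of_hasDerivAt (a := 0) (b := x)
      (f := fun y => Real.exp (-(c * (x - y))))
      (f' := fun y => c * Real.exp (-(c * (x - y)))) (fun y _ => by
        have h1 : HasDerivAt (fun y => -(c * (x - y))) c y := by
          simpa using (((hasDerivAt_id y).const_sub x).const_mul c).fun_neg
        simpa [mul_comm] using h1.exp) (Continuous.intervalIntegrable (by fun_prop) _ _)
    simpa using this
  have hbound : ∫ y in (0:ℝ)..x, c * Real.exp (-(c * (x - y))) * (ε + K * (x - y)) =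
      (ε + K / c) - Real.exp (-(c * x)) * (ε + K * x + K / c) := by
    have := integral_eq_sub_of_hasDerivAt (a := 0) (b := x)
      (f := fun y => Real.exp (-(c * (x - y))) * (ε + K * (x - y) + K / c))
      (f' := fun y => c * Real.exp (-(c * (x - y))) * (ε + K * (x - y))) (fun y _ => by
        have h1 : HasDerivAt (fun y => -(c * (x - y))) c y := by
          simpa using (((hasDerivAt_id y).const_sub x).const_mul c).fun_neg
        have h2 : HasDerivAt (fun y => ε + K * (x - y) + K / c) (-K) y := by
          simpa using ((((hasDerivAt_id y).const_sub x).const_mul K).const_add ε).add_const (K / c)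
        refine (h1.exp.fun_mul h2).congr_deriv ?_
        linear_combination Real.exp (-(c * (x - y))) * mul_div_cancel₀ K hc.ne') (Continuous.intervalIntegrable (by fun_prop) _ _)
    simpa using this
  have hsplit : c * (∫ y in (0:ℝ)..x, Real.exp (-(c * (x - y))) * g y) - g x =
      (∫ y in (0:ℝ)..x, c * Real.exp (-(c * (x - y))) * (g y - g x)) -
        Real.exp (-(c * x)) * g x := by
    have h1 : ∫ y in (0:ℝ)..x, c * Real.exp (-(c * (x - y))) * (g y - g x) =
        (∫ y in (0:ℝ)..x, c * (Real.exp (-(c * (x - y))) * g y)) -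
          ∫ y in (0:ℝ)..x, c * Real.exp (-(c * (x - y))) * g x := by
      rw [← intervalIntegral.integral_sub
        (Continuous.intervalIntegrable (by fun_prop) _ _)
        (Continuous.intervalIntegrable (by fun_prop) _ _)]
      congr 1
      ext y
      ring
    rw [h1, intervalIntegral.integral_const_mul, intervalIntegral.integral_mul_const, hker]
    ring
  have hint : |∫ y in (0:ℝ)..x, c * Real.exp (-(c * (x - y))) * (g y - g x)| ≤
      (ε + K / c) - Real.exp (-(c * x)) * (ε + K * x + K / c) := by
    rw [← hbound, ← Real.norm_eq_abs]
    refine intervalIntegral.norm_integral_le_of_norm_le hx (ae_of_all _ fun y hy => ?_)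
      (Continuous.intervalIntegrable (by fun_prop) _ _)
    have hm := hmod x y
    rw [abs_sub_comm y x, abs_of_nonneg (sub_nonneg.2 hy.2)] at hm
    rw [Real.norm_eq_abs, abs_mul, abs_of_pos (by positivity : 0 < c * Real.exp (-(c * (x - y))))]
    gcongr
  have hgx : |g x| ≤ ε + K * x := by
    simpa [h0, abs_of_nonneg hx] using hmod 0 x
  have htail : |Real.exp (-(c * x)) * g x| ≤ Real.exp (-(c * x)) * (ε + K * x) := by
    rw [abs_mul, abs_of_pos (Real.exp_pos _)]
    gcongr
  have hpos : 0 ≤ Real.exp (-(c * x)) * (K / c) := by positivity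
  rw [hsplit]
  refine (abs_sub _ _).trans ?_
  linarith

theorem integral_jump (f : ℝ → ℝ) (c : ℝ) {x : ℝ} (hx : 0 < x) :
    ∫ y in (0:ℝ)..x, Real.exp (-(c * (x - y))) * (f y - f (-y)) =
      ∫ y in (0:ℝ)..x, Real.exp (-(c * (x - y))) * jump f y := by
  refine intervalIntegral.integral_congr_ae (ae_of_all _ fun y hy => ?_)
  rw [uIoc_of_le hx.le] at hy
  rw [jump_pos f hy.1]

theorem abs_cosF_sub_le {u v : ℝ → ℝ} {η : ℝ} (h : ∀ x, |u x - v x| ≤ η) (t x : ℝ) :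
    |cosF t u x - cosF t v x| ≤ η := by
  have h1 := abs_le.1 (h (x + t))
  have h2 := abs_le.1 (h (x - t))
  unfold cosF
  rw [abs_le]
  constructor <;> linarith [h1.1, h1.2, h2.1, h2.2]

/-- for `f ∈ 𝔛` with `f(0-) = f(0+)`, the snapping-out cosine families
converge to the skew Brownian motion cosine family uniformly in `t ∈ ℝ` (in the norm of `𝔛`,
i.e. uniformly in `x ≠ 0`). -/
theorem statement16 (α β : ℝ) (hα : 0 ≤ α) (hβ : 0 ≤ β) (hαβ : 0 < α + β)
    (f : ℝ → ℝ) (fm fp : ℝ) (hf : memX f)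
    (hfm : Tendsto f (nhdsWithin 0 (Iio 0)) (nhds fm))
    (hfp : Tendsto f (nhdsWithin 0 (Ioi 0)) (nhds fp))
    (heq : fm = fp) :
    ∀ ε : ℝ, 0 < ε → ∃ N : ℕ, ∀ n : ℕ, N ≤ n → ∀ t x : ℝ, x ≠ 0 →
      |restr (cosF t (extL ((n : ℝ) * α) ((n : ℝ) * β) f fm))
          (cosF t (extR ((n : ℝ) * α) ((n : ℝ) * β) f fp)) x -
        restr (cosF t (extSkewL α β f fm)) (cosF t (extSkewR α β f fp)) x| < ε := by
  subst heq
  intro ε hε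
  have hε2 : 0 ≤ ε / 2 := by positivity
  have hg := jump_continuous hf hfm hfp
  obtain ⟨L, hL⟩ := jump_tendsto hf
  -- the extensions differ by at most `2 * (ε / 8 + K / c)` with `c = n * (α + β)`
  obtain ⟨K, hK, hmod⟩ := exists_modulus hg hL (show 0 < ε / 8 by positivity)
  obtain ⟨N, hN⟩ := exists_nat_gt (8 * K / (ε * (α + β)))
  refine ⟨N + 1, fun n hn t x _ => ?_⟩
  have hnN : (N : ℝ) + 1 ≤ n := by exact_mod_cast hn
  have hn0 : (0 : ℝ) < n := by
    have : (0 : ℝ) ≤ N := Nat.cast_nonneg N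
    linarith
  set c : ℝ := n * (α + β) with hc
  have hc0 : 0 < c := by positivity
  have hKc : K / c ≤ ε / 8 := by
    rw [div_lt_iff₀ (by positivity)] at hN
    rw [div_le_iff₀ hc0, hc]
    have : (N : ℝ) * (ε * (α + β)) ≤ n * (ε * (α + β)) := by
      gcongr
      linarith
    linarith
  have hkey : ∀ z, 0 < z →
      |c * (∫ y in (0:ℝ)..z, Real.exp (-(c * (z - y))) * (f y - f (-y))) - (f z - f (-z))|
        ≤ ε / 4 := by
    intro z hz
    rw [integral_jump f c hz, ← jump_pos f hz]
    exact (approx_identity hg (jump_zero f) hK hc0 hz.le hmod).trans (by linarith)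
  have hsum : (n : ℝ) * α + n * β = c := by rw [hc]; ring
  -- each weight `2α/(α+β)`, `2β/(α+β)` is at most `2`
  have hweight : ∀ γ z : ℝ, 0 ≤ γ → γ ≤ α + β → |z| ≤ ε / 4 →
      |2 * γ / (α + β) * z| ≤ ε / 2 := by
    intro γ z h0 h1 hz
    have hw : 2 * γ / (α + β) ≤ 2 := by rw [div_le_iff₀ hαβ]; linarith
    have hw0 : 0 ≤ 2 * γ / (α + β) := by positivity
    rw [abs_mul, abs_of_nonneg hw0]
    calc 2 * γ / (α + β) * |z| ≤ 2 * (ε / 4) := by gcongr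
      _ = ε / 2 := by ring
  have hleft : ∀ z, |extL (n * α) (n * β) f fm z - extSkewL α β f fm z| ≤ ε / 2 := by
    intro z
    unfold extL extSkewL
    rcases lt_trichotomy z 0 with hz | hz | hz
    · simp [hz, hε2]
    · simp [hz, hε2]
    · rw [if_neg hz.not_gt, if_neg hz.ne', if_neg hz.not_gt, if_neg hz.ne', hsum]
      convert hweight α _ hα (by linarith) (hkey z hz) using 2
      rw [hc]
      field_simp
      ring
  have hright : ∀ z, |extR (n * α) (n * β) f fm z - extSkewR α β f fm z| ≤ ε / 2 := by
    intro z
    unfold extR extSkewR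
    rcases lt_trichotomy z 0 with hz | hz | hz
    · rw [if_neg hz.not_gt, if_neg hz.ne, if_neg hz.not_gt, if_neg hz.ne, hsum, ← abs_neg]
      convert hweight β _ hβ (by linarith) (hkey (-z) (by linarith)) using 2
      rw [hc, neg_neg]
      field_simp
      ring
    · simp [hz, hε2]
    · simp [hz, hε2]
  unfold restr
  split_ifs
  · exact (abs_cosF_sub_le hleft t x).trans_lt (by linarith)
  · exact (abs_cosF_sub_le hright t x).trans_lt (by linarith)
end
end

section
/- Fix α, β ≥ 0 with α + β > 0 and γ := √(2(α²+β²)). (a) For every (f₁,f₂) ∈ 𝒞, lim_{n→∞} P_{nα,nβ}(f₁,f₂) = P^skew_{α,β}(f₁,f₂) in the norm of 𝒞, where P^skew_{α,β}(f₁,f₂) := (f₁^e + (2α/γ²)·k₁ − (1/2)·k₂, f₂^e + (2β/γ²)·k₁ + (1/2)·k₂) with k₁ := α f₁^o + β f₂^o and k₂ := f₁^e − f₂^e. (b) The map P^skew_{α,β} is a projection of 𝒞 onto the subspace 𝒞^skew_{α,β} := {(g₁,g₂) ∈ 𝒞 : g₁^e = g₂^e and β g₁^o = α g₂^o}: it maps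 𝒞 into 𝒞^skew_{α,β} and satisfies P^skew_{α,β}(f₁,f₂) = (f₁,f₂) for every (f₁,f₂) ∈ 𝒞^skew_{α,β}. -/
/-!
Writing `G = γ_{a,b}` and `h = k₁ + (G/2) k₂`, the hyperbolic functions in `P_{a,b}` expand into
exponentials `e^{Gx}` and `e^{-Gx}`. The choice of `c` makes the coefficient of `e^{Gx}` a tail
integral of `e^{-Gy} h(y)`, and since `k₁` is odd and `k₂` even the same holds for `e^{-Gx}`. With
`J(x) = ∫₀^∞ e^{-Gt} h(x+t) dt` this gives (`hyperbolic_eq_lap`, `Pone_eq`, `Ptwo_eq`)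

* `g₁(x) = f₁ᵉ(x) + (A-1)/2 · J(x) - (A+1)/2 · J(-x)`, where `A = 2a/G`,
* `g₂(x) = f₂ᵉ(x) + (B+1)/2 · J(x) - (B-1)/2 · J(-x)`, where `B = 2b/G`.

For `(a,b) = (nα,nβ)` the numbers `A`, `B` do not depend on `n`, while `J` is `1/γ` times the
average of `u = k₁ + (γ/2) k₂` (formed with `α`, `β`) against the exponential density of rate `nγ`.
Functions in `C[-∞,∞]` are bounded and uniformly continuous, so `J → u/γ` uniformly
(`tendstoUniformly_lap`), and inserting this limit yields `P^skew`. The projection property is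
algebra with even and odd parts and `γ² = 2(α²+β²)`.
-/

open Filter Topology MeasureTheory Set intervalIntegral

noncomputable section

/-- `γ = sqrt(2(α²+β²))` -/
def gam (α β : ℝ) : ℝ := Real.sqrt (2 * (α ^ 2 + β ^ 2))

/-- `k₁ = α f₁ᵒ + β f₂ᵒ` -/
def kone (α β : ℝ) (f₁ f₂ : ℝ → ℝ) : ℝ → ℝ := fun x => α * oddPart f₁ x + β * oddPart f₂ x

/-- `k₂ = f₁ᵉ - f₂ᵉ` -/
def ktwo (f₁ f₂ : ℝ → ℝ) : ℝ → ℝ := fun x => evenPart f₁ x - evenPart f₂ x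

/-- the constant `c = ∫_0^∞ e^{-γx}(k₁(x) + (γ/2) k₂(x)) dx` -/
def cconst (α β : ℝ) (f₁ f₂ : ℝ → ℝ) : ℝ :=
  ∫ x in Ioi (0:ℝ), Real.exp (-(gam α β * x)) * (kone α β f₁ f₂ x + (gam α β / 2) * ktwo f₁ f₂ x)

/-- first coordinate `g₁` of `P_{α,β}(f₁,f₂)` -/
def Pone (α β : ℝ) (f₁ f₂ : ℝ → ℝ) : ℝ → ℝ := fun x =>
  evenPart f₁ x +
    cconst α β f₁ f₂ * ((2 * α / gam α β) * Real.sinh (gam α β * x) - Real.cosh (gam α β * x)) -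
    conv (fun y => (2 * α / gam α β) * kone α β f₁ f₂ y - (gam α β / 2) * ktwo f₁ f₂ y)
      (fun y => Real.sinh (gam α β * y)) x +
    conv (fun y => kone α β f₁ f₂ y - α * ktwo f₁ f₂ y) (fun y => Real.cosh (gam α β * y)) x

/-- second coordinate `g₂` of `P_{α,β}(f₁,f₂)` -/
def Ptwo (α β : ℝ) (f₁ f₂ : ℝ → ℝ) : ℝ → ℝ := fun x =>
  evenPart f₂ x +
    cconst α β f₁ f₂ * ((2 * β / gam α β) * Real.sinh (gam α β * x) + Real.cosh (gam α β * x)) -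
    conv (fun y => (2 * β / gam α β) * kone α β f₁ f₂ y + (gam α β / 2) * ktwo f₁ f₂ y)
      (fun y => Real.sinh (gam α β * y)) x -
    conv (fun y => kone α β f₁ f₂ y + β * ktwo f₁ f₂ y) (fun y => Real.cosh (gam α β * y)) x

/-- first coordinate of `P^skew_{α,β}` -/
def PskewOne (α β : ℝ) (f₁ f₂ : ℝ → ℝ) : ℝ → ℝ := fun x =>
  evenPart f₁ x + (2 * α / (gam α β) ^ 2) * kone α β f₁ f₂ x - (1 / 2) * ktwo f₁ f₂ x

/-- second coordinate of `P^skew_{α,β}` -/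
def PskewTwo (α β : ℝ) (f₁ f₂ : ℝ → ℝ) : ℝ → ℝ := fun x =>
  evenPart f₂ x + (2 * β / (gam α β) ^ 2) * kone α β f₁ f₂ x + (1 / 2) * ktwo f₁ f₂ x

/-- membership in `𝒞^skew_{α,β}` -/
def memCskew (α β : ℝ) (g₁ g₂ : ℝ → ℝ) : Prop :=
  Cinf g₁ ∧ Cinf g₂ ∧ (∀ x, evenPart g₁ x = evenPart g₂ x) ∧
  (∀ x, β * oddPart g₁ x = α * oddPart g₂ x)

/-! ### Functions in `C[-∞,∞]` -/

lemma Cinf.bounded {f : ℝ → ℝ} (hf : Cinf f) : ∃ M, ∀ x, |f x| ≤ M := by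
  obtain ⟨hc, ⟨L, hL⟩, ⟨L', hL'⟩⟩ := hf
  obtain ⟨a, ha⟩ := eventually_atTop.1
    (hL.abs.eventually (gt_mem_nhds (lt_add_one |L|)))
  obtain ⟨b, hb⟩ := eventually_atBot.1
    (hL'.abs.eventually (gt_mem_nhds (lt_add_one |L'|)))
  obtain ⟨C, hC⟩ := (isCompact_Icc (a := b) (b := a)).exists_bound_of_continuousOn hc.continuousOn
  refine ⟨max C (max (|L| + 1) (|L'| + 1)), fun x => ?_⟩
  rcases le_total a x with h | h
  · exact (ha x h).le.trans ((le_max_left _ _).trans (le_max_right _ _))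
  rcases le_total x b with h' | h'
  · exact (hb x h').le.trans ((le_max_right _ _).trans (le_max_right _ _))
  · exact (hC x ⟨h', h⟩).trans (le_max_left _ _)

/-- The two limits may differ, so `f` is split as `f (max x 0) + f (min x 0) - f 0`; each of the
first two summands factors through a function with a single limit along `cocompact ℝ`. -/
lemma Cinf.uniformContinuous {f : ℝ → ℝ} (hf : Cinf f) : UniformContinuous f := by
  obtain ⟨hc, ⟨L, hL⟩, ⟨L', hL'⟩⟩ := hf
  have habs : Tendsto (fun x : ℝ => |x|) (cocompact ℝ) atTop := tendsto_norm_cocompact_atTop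
  have h1 : UniformContinuous (fun x => f |x|) :=
    (hc.comp continuous_abs).uniformContinuous_of_tendsto_cocompact (hL.comp habs)
  have h2 : UniformContinuous (fun x => f (-|x|)) :=
    (hc.comp continuous_abs.neg).uniformContinuous_of_tendsto_cocompact
      (hL'.comp (tendsto_neg_atTop_atBot.comp habs))
  have hmax : UniformContinuous (fun x : ℝ => max x 0) :=
    (LipschitzWith.id.max_const 0).uniformContinuous
  have hmin : UniformContinuous (fun x : ℝ => min x 0) :=
    (LipschitzWith.id.min_const 0).uniformContinuous
  have h3 := ((h1.comp hmax).add (h2.comp hmin)).sub (uniformContinuous_const (b := f 0))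
  convert h3 using 1
  funext x
  rcases le_total 0 x with h | h <;> simp [h, abs_of_nonneg, abs_of_nonpos]

lemma Cinf.lin {f g : ℝ → ℝ} (hf : Cinf f) (hg : Cinf g) (a b : ℝ) :
    Cinf (fun x => a * f x + b * g x) := by
  obtain ⟨hc, ⟨L, hL⟩, ⟨L', hL'⟩⟩ := hf
  obtain ⟨gc, ⟨R, hR⟩, ⟨R', hR'⟩⟩ := hg
  exact ⟨by fun_prop, ⟨_, (hL.const_mul a).add (hR.const_mul b)⟩,
    ⟨_, (hL'.const_mul a).add (hR'.const_mul b)⟩⟩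

lemma Cinf.reflect {f : ℝ → ℝ} (hf : Cinf f) : Cinf (fun x => f (-x)) := by
  obtain ⟨hc, ⟨L, hL⟩, ⟨L', hL'⟩⟩ := hf
  exact ⟨by fun_prop, ⟨L', hL'.comp tendsto_neg_atTop_atBot⟩,
    ⟨L, hL.comp tendsto_neg_atBot_atTop⟩⟩

lemma Cinf.evenPart {f : ℝ → ℝ} (hf : Cinf f) : Cinf (evenPart f) := by
  convert hf.lin hf.reflect (1 / 2) (1 / 2) using 1
  funext x; simp only [_root_.evenPart]; ring

lemma Cinf.oddPart {f : ℝ → ℝ} (hf : Cinf f) : Cinf (oddPart f) := by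
  convert hf.lin hf.reflect (1 / 2) (-1 / 2) using 1
  funext x; simp only [_root_.oddPart]; ring

lemma Cinf.kone {f g : ℝ → ℝ} (hf : Cinf f) (hg : Cinf g) (α β : ℝ) : Cinf (kone α β f g) :=
  hf.oddPart.lin hg.oddPart α β

lemma Cinf.ktwo {f g : ℝ → ℝ} (hf : Cinf f) (hg : Cinf g) : Cinf (ktwo f g) := by
  convert hf.evenPart.lin hg.evenPart 1 (-1) using 1
  funext x; simp only [_root_.ktwo]; ring

lemma kone_neg (α β : ℝ) (f g : ℝ → ℝ) (x : ℝ) : kone α β f g (-x) = -kone α β f g x := by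
  simp only [kone, oddPart, neg_neg]; ring

lemma ktwo_neg (f g : ℝ → ℝ) (x : ℝ) : ktwo f g (-x) = ktwo f g x := by
  simp only [ktwo, evenPart, neg_neg]; ring

/-! ### The Laplace-type average -/

/-- The Laplace transform at `G` of the translate `h(x + ·)`. -/
def lap (G : ℝ) (h : ℝ → ℝ) (x : ℝ) : ℝ := ∫ t in Ioi (0:ℝ), Real.exp (-(G * t)) * h (x + t)

lemma integrable_expMul {G : ℝ} (hG : 0 < G) (a : ℝ) {h : ℝ → ℝ} (hc : Continuous h) {M : ℝ}
    (hM : ∀ x, |h x| ≤ M) : IntegrableOn (fun t => Real.exp (-(G * t)) * h t) (Ioi a) := by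
  have h1 : IntegrableOn (fun t => Real.exp (-(G * t))) (Ioi a) := by
    simpa [neg_mul] using integrableOn_exp_mul_Ioi (neg_lt_zero.2 hG) a
  exact h1.mul_bdd (c := M) hc.aestronglyMeasurable (ae_of_all _ hM)

/-- Shifting the variable turns `lap` into a tail integral, i.e. the integral over `(0, ∞)` minus
the one over `[0, x]`. -/
lemma lap_eq {G : ℝ} (hG : 0 < G) {h : ℝ → ℝ} (hc : Continuous h) {M : ℝ}
    (hM : ∀ x, |h x| ≤ M) (x : ℝ) :
    lap G h x = Real.exp (G * x) * ((∫ t in Ioi (0:ℝ), Real.exp (-(G * t)) * h t) -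
      ∫ t in (0:ℝ)..x, Real.exp (-(G * t)) * h t) := by
  have h1 := intervalIntegral.integral_Ioi_sub_Ioi' (integrable_expMul hG 0 hc hM)
    (integrable_expMul hG x hc hM)
  rw [← h1, sub_sub_cancel]
  have h2 : (∫ t in Ioi (0:ℝ), Real.exp (-(G * (t + x))) * h (t + x)) =
      ∫ t in Ioi x, Real.exp (-(G * t)) * h t := by
    have := (measurePreserving_add_right volume x).setIntegral_preimage_emb
      (measurableEmbedding_addRight x) (fun t => Real.exp (-(G * t)) * h t) (Ioi x)
    simpa using this
  rw [← h2, ← MeasureTheory.integral_const_mul]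
  refine MeasureTheory.integral_congr_ae (ae_of_all _ fun t => ?_)
  simp only
  rw [← mul_assoc, ← Real.exp_add, add_comm t x]
  congr 2; ring

lemma integral_t_exp {G : ℝ} (hG : 0 < G) :
    IntegrableOn (fun t => t * Real.exp (-(G * t))) (Ioi 0) ∧
      ∫ t in Ioi (0:ℝ), t * Real.exp (-(G * t)) = 1 / G ^ 2 := by
  have h0 := Real.integral_rpow_mul_exp_neg_mul_Ioi (a := 2) (r := G) two_pos hG
  have e : ∀ t : ℝ, t ^ ((2:ℝ) - 1) = t := fun t => by norm_num
  simp only [e] at h0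
  have h1 : ∫ t in Ioi (0:ℝ), t * Real.exp (-(G * t)) = 1 / G ^ 2 := by
    rw [h0]; norm_num
  refine ⟨?_, h1⟩
  by_contra hn
  rw [MeasureTheory.integral_undef hn] at h1
  have : 0 < 1 / G ^ 2 := by positivity
  linarith

/-- Quantitative approximate-identity estimate: if increments of `u` are at most `ε + K t`, then
`G * lap G u` is within `ε + K / G` of `u`. -/
lemma lap_estimate {G : ℝ} (hG : 0 < G) {u : ℝ → ℝ} (hc : Continuous u) {M : ℝ}
    (hM : ∀ x, |u x| ≤ M) {ε K : ℝ}
    (hu : ∀ x t, 0 < t → |u (x + t) - u x| ≤ ε + K * t) (x : ℝ) :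
    |G * lap G u x - u x| ≤ ε + K / G := by
  have hE : IntegrableOn (fun t => Real.exp (-(G * t))) (Ioi 0) := by
    simpa [neg_mul] using integrableOn_exp_mul_Ioi (neg_lt_zero.2 hG) 0
  have hEi : ∫ t in Ioi (0:ℝ), Real.exp (-(G * t)) = 1 / G := by
    have := integral_exp_mul_Ioi (neg_lt_zero.2 hG) 0
    simpa [neg_mul] using this
  have hI := integrable_expMul hG 0 (h := fun t => u (x + t)) (by fun_prop) (fun t => hM (x + t))
  obtain ⟨hT, hTi⟩ := integral_t_exp hG
  have e1 : lap G u x - u x / G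
      = ∫ t in Ioi (0:ℝ), Real.exp (-(G * t)) * (u (x + t) - u x) := by
    simp only [mul_sub]
    rw [MeasureTheory.integral_sub hI (hE.mul_const _), MeasureTheory.integral_mul_const, hEi, lap]
    ring
  have e2 : |lap G u x - u x / G| ≤
      ∫ t in Ioi (0:ℝ), (ε * Real.exp (-(G * t)) + K * (t * Real.exp (-(G * t)))) := by
    rw [e1, ← Real.norm_eq_abs]
    refine MeasureTheory.norm_integral_le_of_norm_le ((hE.const_mul ε).add (hT.const_mul K)) ?_
    refine (ae_restrict_iff' measurableSet_Ioi).2 (ae_of_all _ fun t ht => ?_)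
    rw [Real.norm_eq_abs, abs_mul, abs_of_pos (Real.exp_pos _)]
    have := mul_le_mul_of_nonneg_left (hu x t ht) (Real.exp_pos (-(G * t))).le
    linarith
  rw [MeasureTheory.integral_add (hE.const_mul ε) (hT.const_mul K),
    MeasureTheory.integral_const_mul, MeasureTheory.integral_const_mul, hEi, hTi] at e2
  have e3 : G * lap G u x - u x = G * (lap G u x - u x / G) := by field_simp
  rw [e3, abs_mul, abs_of_pos hG]
  calc _ ≤ G * (ε * (1 / G) + K * (1 / G ^ 2)) := mul_le_mul_of_nonneg_left e2 hG.le
    _ = _ := by field_simp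

/-- For `u ∈ C[-∞,∞]`, the averages `∫₀^∞ e^{-nγt} n u(x+t) dt` tend to `u(x)/γ` uniformly in `x`. -/
lemma tendstoUniformly_lap {γ : ℝ} (hγ : 0 < γ) {u : ℝ → ℝ} (hu : Cinf u) :
    TendstoUniformly (fun (n : ℕ) x => lap (n * γ) (fun y => n * u y) x)
      (fun x => u x / γ) atTop := by
  obtain ⟨M, hM⟩ := hu.bounded
  have hM0 : 0 ≤ M := (abs_nonneg _).trans (hM 0)
  rw [Metric.tendstoUniformly_iff]
  intro ε hε
  obtain ⟨δ, hδ, hd⟩ := Metric.uniformContinuous_iff.1 hu.uniformContinuous (ε * γ / 2)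
    (by positivity)
  have hinc : ∀ x t, 0 < t → |u (x + t) - u x| ≤ ε * γ / 2 + (2 * M / δ) * t := by
    intro x t ht
    rcases lt_or_ge t δ with h | h
    · have := hd (a := x + t) (b := x) (by simpa [Real.dist_eq, abs_of_pos ht] using h)
      rw [Real.dist_eq] at this
      have : 0 ≤ (2 * M / δ) * t := by positivity
      linarith
    · have h1 : |u (x + t) - u x| ≤ 2 * M := by
        have := abs_sub (u (x + t)) (u x)
        linarith [hM (x + t), hM x]
      have h2 : 2 * M ≤ (2 * M / δ) * t := by
        rw [div_mul_eq_mul_div, le_div_iff₀ hδ]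
        exact mul_le_mul_of_nonneg_left h (by positivity)
      have : 0 < ε * γ / 2 := by positivity
      linarith
  have hlim : Tendsto (fun n : ℕ => (2 * M / δ) / (n * γ)) atTop (𝓝 0) :=
    tendsto_const_nhds.div_atTop (tendsto_natCast_atTop_atTop.atTop_mul_const hγ)
  filter_upwards [hlim.eventually (gt_mem_nhds (show (0:ℝ) < ε * γ / 2 by positivity)),
    eventually_gt_atTop 0] with n hn hn0 x
  have hn0' : (0:ℝ) < n := Nat.cast_pos.2 hn0
  have h := lap_estimate (mul_pos hn0' hγ) hu.1 hM hinc x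
  have e : lap (n * γ) (fun y => n * u y) x = n * lap (n * γ) u x := by
    simp only [lap, ← MeasureTheory.integral_const_mul]
    congr 1; funext t; ring
  rw [e, dist_comm, Real.dist_eq]
  have e' : n * lap (n * γ) u x - u x / γ = (n * γ * lap (n * γ) u x - u x) / γ := by
    field_simp
  rw [e', abs_div, abs_of_pos hγ, div_lt_iff₀ hγ]
  linarith

/-! ### Representation of `P_{a,b}` through averages -/

/-- The cancellation behind the theorem: expanding `sinh` and `cosh` into exponentials, the
coefficient of the growing exponential is a tail integral, and by parity so is that of the decaying
one. The parameter `s` is `1` for the first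
coordinate of `P_{a,b}` and `-1` for the second. -/
lemma hyperbolic_eq_lap {G : ℝ} (hG : 0 < G) {A a s : ℝ} (ha : a = A * G / 2)
    {p q : ℝ → ℝ} (hp : Cinf p) (hq : Cinf q) (hpo : ∀ x, p (-x) = -p x)
    (hqe : ∀ x, q (-x) = q x) (x : ℝ) :
    (∫ t in Ioi (0:ℝ), Real.exp (-(G * t)) * (p t + (G / 2) * q t)) *
          (A * Real.sinh (G * x) - s * Real.cosh (G * x)) -
        conv (fun y => A * p y - s * ((G / 2) * q y)) (fun y => Real.sinh (G * y)) x +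
        conv (fun y => s * p y - a * q y) (fun y => Real.cosh (G * y)) x =
      (A - s) / 2 * lap G (fun y => p y + (G / 2) * q y) x -
        (A + s) / 2 * lap G (fun y => p y + (G / 2) * q y) (-x) := by
  obtain ⟨M, hM⟩ := (show Cinf (fun y => p y + (G / 2) * q y) by
    simpa using hp.lin hq 1 (G / 2)).bounded
  have hpc := hp.1
  have hqc := hq.1
  have hc : Continuous (fun y => p y + (G / 2) * q y) := by fun_prop
  rw [lap_eq hG hc hM, lap_eq hG hc hM]
  set c := ∫ t in Ioi (0:ℝ), Real.exp (-(G * t)) * (p t + (G / 2) * q t)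
  have hswap : ∀ f g : ℝ → ℝ, conv f g x = ∫ y in (0:ℝ)..x, f y * g (x - y) := by
    intro f g
    have := intervalIntegral.integral_comp_sub_left (a := 0) (b := x)
      (fun y => f y * g (x - y)) x
    simpa [conv] using this
  have hneg : (∫ t in (0:ℝ)..(-x), Real.exp (-(G * t)) * (p t + (G / 2) * q t)) =
      ∫ t in (0:ℝ)..x, Real.exp (G * t) * (p t - (G / 2) * q t) := by
    have := intervalIntegral.integral_comp_neg (a := 0) (b := x)
      (fun t => Real.exp (-(G * t)) * (p t + (G / 2) * q t))
    rw [neg_zero] at this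
    rw [intervalIntegral.integral_symm, ← this, ← intervalIntegral.integral_neg]
    congr 1; funext t
    rw [hpo, hqe, mul_neg, neg_neg]
    ring
  rw [hneg, hswap, hswap, ← sub_eq_zero]
  have hcomb : (∫ y in (0:ℝ)..x, (s * p y - a * q y) * Real.cosh (G * (x - y))) -
      (∫ y in (0:ℝ)..x, (A * p y - s * ((G / 2) * q y)) * Real.sinh (G * (x - y))) =
      -((A - s) / 2 * Real.exp (G * x)) *
          (∫ t in (0:ℝ)..x, Real.exp (-(G * t)) * (p t + (G / 2) * q t)) +
        ((A + s) / 2 * Real.exp (G * -x)) *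
          ∫ t in (0:ℝ)..x, Real.exp (G * t) * (p t - (G / 2) * q t) := by
    rw [← intervalIntegral.integral_const_mul, ← intervalIntegral.integral_const_mul,
      ← intervalIntegral.integral_add, ← intervalIntegral.integral_sub]
    · congr 1; funext y
      have e1 : G * (x - y) = G * x + -(G * y) := by ring
      have e2 : -(G * x + -(G * y)) = G * -x + G * y := by ring
      rw [e1, Real.sinh_eq, Real.cosh_eq, e2, Real.exp_add, Real.exp_add, ha]
      ring
    all_goals exact Continuous.intervalIntegrable (by fun_prop) _ _
  have e3 : -(G * x) = G * -x := by ring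
  rw [Real.sinh_eq, Real.cosh_eq, e3]
  linear_combination hcomb

lemma gam_pos {α β : ℝ} (hα : 0 ≤ α) (hαβ : 0 < α + β) : 0 < gam α β := by
  refine Real.sqrt_pos.2 ?_
  rcases hα.eq_or_lt with h | h
  · subst h
    have : 0 < β := by linarith
    positivity
  · positivity

lemma gam_sq (α β : ℝ) : gam α β ^ 2 = 2 * (α ^ 2 + β ^ 2) := Real.sq_sqrt (by positivity)

lemma gam_nat_mul (α β : ℝ) (n : ℕ) : gam (n * α) (n * β) = n * gam α β := by
  rw [gam, gam, show 2 * (((n:ℝ) * α) ^ 2 + (n * β) ^ 2) = n ^ 2 * (2 * (α ^ 2 + β ^ 2)) by ring,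
    Real.sqrt_mul (by positivity), Real.sqrt_sq (by positivity)]

lemma kone_nat_mul (α β : ℝ) (f g : ℝ → ℝ) (n : ℕ) :
    kone (n * α) (n * β) f g = fun x => n * kone α β f g x := by
  funext x; simp only [kone]; ring

/-- The function `u = k₁ + (γ/2) k₂` whose averages appear in `P_{nα,nβ}`. -/
def uker (α β : ℝ) (f₁ f₂ : ℝ → ℝ) : ℝ → ℝ :=
  fun x => kone α β f₁ f₂ x + gam α β / 2 * ktwo f₁ f₂ x

lemma Cinf.uker {f g : ℝ → ℝ} (hf : Cinf f) (hg : Cinf g) (α β : ℝ) : Cinf (uker α β f g) := by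
  convert (hf.kone hg α β).lin (hf.ktwo hg) 1 (gam α β / 2) using 1
  funext x; simp only [_root_.uker, one_mul]

lemma lap_scaled (α β : ℝ) (f₁ f₂ : ℝ → ℝ) (n : ℕ) :
    (fun y => kone (n * α) (n * β) f₁ f₂ y + n * gam α β / 2 * ktwo f₁ f₂ y) =
      fun y => n * uker α β f₁ f₂ y := by
  funext y; rw [kone_nat_mul]; simp only [uker]; ring

lemma Pone_eq {α β : ℝ} (hγ : 0 < gam α β) {f₁ f₂ : ℝ → ℝ} (h₁ : Cinf f₁) (h₂ : Cinf f₂)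
    {n : ℕ} (hn : 0 < n) (x : ℝ) :
    Pone (n * α) (n * β) f₁ f₂ x = evenPart f₁ x +
      ((2 * α / gam α β - 1) / 2 * lap (n * gam α β) (fun y => n * uker α β f₁ f₂ y) x -
       (2 * α / gam α β + 1) / 2 * lap (n * gam α β) (fun y => n * uker α β f₁ f₂ y) (-x)) := by
  have hn' : (0:ℝ) < n := Nat.cast_pos.2 hn
  have hA : 2 * (n * α) / (n * gam α β) = 2 * α / gam α β := by field_simp
  have key := hyperbolic_eq_lap (mul_pos hn' hγ) (A := 2 * α / gam α β) (a := n * α) (s := 1)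
    (by field_simp) (h₁.kone h₂ (n * α) (n * β)) (h₁.ktwo h₂)
    (kone_neg _ _ _ _) (ktwo_neg _ _) x
  rw [lap_scaled] at key
  simp only [one_mul] at key
  rw [← key, Pone, cconst, gam_nat_mul, hA]
  ring

lemma Ptwo_eq {α β : ℝ} (hγ : 0 < gam α β) {f₁ f₂ : ℝ → ℝ} (h₁ : Cinf f₁) (h₂ : Cinf f₂)
    {n : ℕ} (hn : 0 < n) (x : ℝ) :
    Ptwo (n * α) (n * β) f₁ f₂ x = evenPart f₂ x +
      ((2 * β / gam α β + 1) / 2 * lap (n * gam α β) (fun y => n * uker α β f₁ f₂ y) x -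
       (2 * β / gam α β - 1) / 2 * lap (n * gam α β) (fun y => n * uker α β f₁ f₂ y) (-x)) := by
  have hn' : (0:ℝ) < n := Nat.cast_pos.2 hn
  have hB : 2 * (n * β) / (n * gam α β) = 2 * β / gam α β := by field_simp
  have key := hyperbolic_eq_lap (mul_pos hn' hγ) (A := 2 * β / gam α β) (a := n * β) (s := -1)
    (by field_simp) (h₁.kone h₂ (n * α) (n * β)) (h₁.ktwo h₂)
    (kone_neg _ _ _ _) (ktwo_neg _ _) x
  have hconv : ∀ p q g : ℝ → ℝ, ∀ b : ℝ,
      conv (fun y => -1 * p y - b * q y) g x = -conv (fun y => p y + b * q y) g x := by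
    intro p q g b
    simp only [conv, ← intervalIntegral.integral_neg]
    congr 1; funext y; ring
  rw [lap_scaled, hconv] at key
  simp only [sub_neg_eq_add, neg_one_mul, ← sub_eq_add_neg] at key
  rw [← key, Ptwo, cconst, gam_nat_mul, hB]
  ring

/-- Passage to the limit in `f + (a · lap(x) - b · lap(-x))`. -/
lemma tendstoUniformly_comb {γ : ℝ} (hγ : 0 < γ) {u : ℝ → ℝ} (hu : Cinf u) (f : ℝ → ℝ)
    (a b : ℝ) {F : ℕ → ℝ → ℝ} {g : ℝ → ℝ}
    (hF : ∀ n : ℕ, 0 < n → ∀ x, F n x = f x + (a * lap (n * γ) (fun y => n * u y) x -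
      b * lap (n * γ) (fun y => n * u y) (-x)))
    (hg : ∀ x, g x = f x + (a * (u x / γ) - b * (u (-x) / γ))) :
    TendstoUniformly F g atTop := by
  have h := Metric.tendstoUniformly_iff.1 (tendstoUniformly_lap hγ hu)
  rw [Metric.tendstoUniformly_iff]
  intro ε hε
  have hpos : 0 < |a| + |b| + 1 := by positivity
  filter_upwards [h (ε / (|a| + |b| + 1)) (by positivity), eventually_gt_atTop 0] with n hn hn0 x
  have h1 := hn x
  have h2 := hn (-x)
  rw [Real.dist_eq] at h1 h2 ⊢
  rw [hF n hn0, hg]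
  set X := u x / γ - lap (n * γ) (fun y => n * u y) x
  set Y := u (-x) / γ - lap (n * γ) (fun y => n * u y) (-x)
  have e : f x + (a * (u x / γ) - b * (u (-x) / γ)) - (f x + (a * lap (n * γ) (fun y => n * u y) x -
      b * lap (n * γ) (fun y => n * u y) (-x))) = a * X - b * Y := by ring
  rw [e]
  calc |a * X - b * Y| ≤ |a * X| + |b * Y| := abs_sub _ _
    _ = |a| * |X| + |b| * |Y| := by rw [abs_mul, abs_mul]
    _ ≤ |a| * (ε / (|a| + |b| + 1)) + |b| * (ε / (|a| + |b| + 1)) := by gcongr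
    _ < (|a| + |b| + 1) * (ε / (|a| + |b| + 1)) := by
      have : 0 < ε / (|a| + |b| + 1) := by positivity
      linarith
    _ = ε := by field_simp

/-- (a) `P_{nα,nβ}` converges strongly (coordinatewise uniformly on `ℝ`)
to `P^skew_{α,β}`; (b) `P^skew_{α,β}` is a projection of `𝒞` onto `𝒞^skew_{α,β}`. -/
theorem statement18 (α β : ℝ) (hα : 0 ≤ α) (hβ : 0 ≤ β) (hαβ : 0 < α + β) :
    (∀ f₁ f₂ : ℝ → ℝ, Cinf f₁ → Cinf f₂ →
      TendstoUniformly (fun (n : ℕ) (x : ℝ) => Pone ((n : ℝ) * α) ((n : ℝ) * β) f₁ f₂ x)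
        (PskewOne α β f₁ f₂) atTop ∧
      TendstoUniformly (fun (n : ℕ) (x : ℝ) => Ptwo ((n : ℝ) * α) ((n : ℝ) * β) f₁ f₂ x)
        (PskewTwo α β f₁ f₂) atTop) ∧
    (∀ f₁ f₂ : ℝ → ℝ, Cinf f₁ → Cinf f₂ →
      memCskew α β (PskewOne α β f₁ f₂) (PskewTwo α β f₁ f₂)) ∧
    (∀ f₁ f₂ : ℝ → ℝ, memCskew α β f₁ f₂ →
      PskewOne α β f₁ f₂ = f₁ ∧ PskewTwo α β f₁ f₂ = f₂) := by
  have hγ := gam_pos hα hαβ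
  have hsq := gam_sq α β
  have hne : α ^ 2 + β ^ 2 ≠ 0 := by
    have : 0 < gam α β ^ 2 := by positivity
    intro h; rw [hsq, h] at this; simp at this
  refine ⟨fun f₁ f₂ h₁ h₂ => ⟨?_, ?_⟩, fun f₁ f₂ h₁ h₂ => ⟨?_, ?_, fun x => ?_, fun x => ?_⟩,
    fun f₁ f₂ ⟨_, _, he, ho⟩ => ⟨?_, ?_⟩⟩
  · refine tendstoUniformly_comb hγ (h₁.uker h₂ α β) _ _ _
      (fun n hn x => Pone_eq hγ h₁ h₂ hn x) fun x => ?_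
    simp only [PskewOne, uker, kone_neg, ktwo_neg]
    field_simp
    ring
  · refine tendstoUniformly_comb hγ (h₁.uker h₂ α β) _ _ _
      (fun n hn x => Ptwo_eq hγ h₁ h₂ hn x) fun x => ?_
    simp only [PskewTwo, uker, kone_neg, ktwo_neg]
    field_simp
    ring
  · convert (h₁.evenPart.lin (h₁.kone h₂ α β) 1 (2 * α / gam α β ^ 2)).lin (h₁.ktwo h₂)
      1 (-1 / 2) using 1
    funext x; simp only [PskewOne]; ring
  · convert (h₂.evenPart.lin (h₁.kone h₂ α β) 1 (2 * β / gam α β ^ 2)).lin (h₁.ktwo h₂)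
      1 (1 / 2) using 1
    funext x; simp only [PskewTwo]; ring
  · simp only [evenPart, PskewOne, PskewTwo, kone, oddPart, ktwo, neg_neg]
    ring
  · simp only [evenPart, PskewOne, PskewTwo, kone, oddPart, ktwo, neg_neg]
    ring
  · funext x
    have hx := he x
    have ox := ho x
    have hd : f₁ x = evenPart f₁ x + oddPart f₁ x := by simp only [evenPart, oddPart]; ring
    simp only [PskewOne, kone, ktwo, hsq, hd]
    rw [hx]
    field_simp
    linear_combination -2 * β * ox
  · funext x
    have hx := he x
    have ox := ho x
    have hd : f₂ x = evenPart f₂ x + oddPart f₂ x := by simp only [evenPart, oddPart]; ring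
    simp only [PskewTwo, kone, ktwo, hsq, hd]
    rw [hx]
    field_simp
    linear_combination 2 * α * ox
end
end
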